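/- There exist universal constants c > 0 and n₀ such that for all n ≥ n₀, r ≥ 2, and k with n·r ≤ k ≤ n²: if a randomized t-round adaptive algorithm making k exact linear measurements per round is such that for every symmetric n×n real matrix A it outputs a matrix B of rank at most r satisfying ‖A − B‖ ≤ 2·σ_{r+1}(A) with probability at least 99/100 (over the seed), then t ≥ c·log(n²/k)/log log n. -/

import Mathlib

/-!
Run the algorithm on `A = α (u vᵀ + v uᵀ) + G + Gᵀ`, where `u, v` are random sign vectors, `G` has
independent standard Gaussian entries and `α` is a large multiple of `1 / √n`. The plant
`α (u vᵀ + v uᵀ)` has rank at most two, so `σ_{r+1}(A) ≤ ‖G + Gᵀ‖ = O(√n)`, and a successful output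
is within a small multiple of `α n` of the plant in operator norm. Only a fraction `4 e^{-n/32}` of
all plants is that close to a given matrix, so success requires information about the plant.

Measurements of `A` are linear measurements of the Gaussian vector `G` shifted by `x = α u ⊗ v`.
Let `P` be the orthogonal projection onto the span of the queries made so far. The likelihood ratio
between the shifted and the unshifted history depends on `x` only through `P x`. Hence, while the
captured energy `|P x|²` is at most `b`, events about the history are at most `e^ℓ` times likelier
under the shift than without it, up to an error `e^{b - ℓ}`. Without the shift the queries are
independent of the plant, and the energy which they capture has exponential tails. Comparing the
two models round by round, the captured energy grows at most by a constant factor `R` per round,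
from `O(D)` with `D = O(1 + t k / n)`. Averaging the success over plants, noise and seed gives, for
success probability `p`, `p (1 - e^{-n}) ≤ (2t + 1) e^{-D} + 4 e^{3 D R^t + D - n/32}`, which fails
when `R^t` is below a small power of `n² / k`. Hence even `t ≥ c log (n² / k)`.
-/

open MeasureTheory ProbabilityTheory Matrix
open scoped ENNReal Classical

noncomputable section

/-- Squared Euclidean norm of a finitely-indexed real vector. -/
def sqNorm {ι : Type*} [Fintype ι] (x : ι → ℝ) : ℝ := ∑ i, x i ^ 2

/-- Squared Frobenius norm of a real matrix. -/
def frobSq {m n : Type*} [Fintype m] [Fintype n] (A : Matrix m n ℝ) : ℝ :=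
  ∑ i, ∑ j, A i j ^ 2

/-- Spectral (ℓ₂ operator) norm of a real matrix. -/
def specNorm {m n : Type*} [Fintype m] [Fintype n] (A : Matrix m n ℝ) : ℝ :=
  sSup ((fun x : n → ℝ => Real.sqrt (sqNorm (A.mulVec x))) '' {x | sqNorm x ≤ 1})

/-- `i`-th largest singular value (1-based), characterized via
`σ_i(A) = min {‖A − X‖ : rank X ≤ i − 1}`. -/
def singVal {m n : Type*} [Fintype m] [Fintype n] (A : Matrix m n ℝ) (i : ℕ) : ℝ :=
  sInf {c | ∃ X : Matrix m n ℝ, X.rank ≤ i - 1 ∧ c = specNorm (A - X)}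

/-- Flattening of an `n × n` matrix into a vector in `ℝ^{n²}`. -/
def vec (n : ℕ) (A : Matrix (Fin n) (Fin n) ℝ) : Fin (n * n) → ℝ :=
  fun i => A (finProdFinEquiv.symm i).1 (finProdFinEquiv.symm i).2

/-- `u ⊗ v = vec (u vᵀ) ∈ ℝ^{n²}`. -/
def tensor {n : ℕ} (u v : Fin n → ℝ) : Fin (n * n) → ℝ :=
  vec n (Matrix.of fun i j => u i * v j)

/-- Standard Gaussian measure on `ι → ℝ`. -/
def stdGaussian (ι : Type*) [Fintype ι] : Measure (ι → ℝ) :=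
  Measure.pi fun _ => gaussianReal 0 1

/-- Standard Gaussian measure on `n × n` matrices (as `Fin n → Fin n → ℝ`). -/
def stdGaussianMat (n : ℕ) : Measure (Fin n → Fin n → ℝ) :=
  Measure.pi fun _ => stdGaussian (Fin n)

/-- Query maps of a deterministic `t`-round adaptive algorithm making `k` linear
measurements per round on inputs in `ℝ^N`. -/
def QueryMaps (N k t : ℕ) : Type :=
  (j : Fin t) → (Fin (j : ℕ) → (Fin k → ℝ)) → Matrix (Fin k) (Fin N) ℝ

namespace QueryMaps

variable {N k t : ℕ}

/-- Restriction of a round-`j` history to the first `i` rounds. -/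
def prefixHist {j : Fin t} (h : Fin (j : ℕ) → Fin k → ℝ) {i : Fin t}
    (hij : (i : ℕ) < (j : ℕ)) : Fin (i : ℕ) → Fin k → ℝ :=
  fun l => h ⟨l.1, l.isLt.trans hij⟩

/-- Validity of query maps: measurability, orthonormal rows within each round, and
orthogonality across rounds along consistent histories. -/
def Valid (Q : QueryMaps N k t) : Prop :=
  (∀ (j : Fin t) (i : Fin k) (l : Fin N), Measurable fun h => Q j h i l) ∧
  (∀ (j : Fin t) (h : Fin (j : ℕ) → Fin k → ℝ), Q j h * (Q j h)ᵀ = 1) ∧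
  (∀ (j i : Fin t) (hij : (i : ℕ) < (j : ℕ)) (h : Fin (j : ℕ) → Fin k → ℝ),
      Q j h * (Q i (prefixHist h hij))ᵀ = 0)

/-- Responses of the algorithm under exact linear measurements of `a`. -/
def resp (Q : QueryMaps N k t) (a : Fin N → ℝ) (j : Fin t) : Fin k → ℝ :=
  (Q j fun i => resp Q a ⟨i.1, i.isLt.trans j.isLt⟩).mulVec a
termination_by (j : ℕ)
decreasing_by exact i.isLt

/-- Responses of the algorithm under noisy linear measurements of `a`, with fresh
per-round noise `g`. -/
def nresp (Q : QueryMaps N k t) (a : Fin N → ℝ) (g : Fin t → Fin k → ℝ) (j : Fin t) :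
    Fin k → ℝ :=
  ((Q j fun i => nresp Q a g ⟨i.1, i.isLt.trans j.isLt⟩).mulVec a) + g j
termination_by (j : ℕ)
decreasing_by exact i.isLt

/-- The `tk × N` matrix stacking all the query matrices realized along the run of the
algorithm on input `a` (exact measurements). -/
def runMat (Q : QueryMaps N k t) (a : Fin N → ℝ) : Matrix (Fin t × Fin k) (Fin N) ℝ :=
  Matrix.of fun p l =>
    Q p.1 (fun i => resp Q a ⟨i.1, i.isLt.trans p.1.isLt⟩) p.2 l

end QueryMaps

/-- Kullback–Leibler divergence, valued in `[0, ∞]`, defined with the natural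
logarithm. -/
def klDiv {Ω : Type*} [MeasurableSpace Ω] (P Q : Measure Ω) : ℝ≥0∞ :=
  if P ≪ Q ∧ Integrable (fun x => Real.log ((P.rnDeriv Q x).toReal)) P then
    ENNReal.ofReal (∫ x, Real.log ((P.rnDeriv Q x).toReal) ∂P)
  else ⊤


/-- The rank-`r` plant `Σ_{i=1}^r uᵢ vᵢᵀ` built from the rows of `U` and `V`. -/
def plant {n r : ℕ} (U V : Fin r → Fin n → ℝ) : Matrix (Fin n) (Fin n) ℝ :=
  Matrix.of fun i j => ∑ l, U l i * V l j

/-- Schatten-`p` norm (real `p`), via the singular values. -/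
def schattenNorm {n : ℕ} (p : ℝ) (A : Matrix (Fin n) (Fin n) ℝ) : ℝ :=
  (∑ i ∈ Finset.range n, singVal A (i + 1) ^ p) ^ (1 / p)

/-- Ky-Fan `p` norm: sum of the `p` largest singular values. -/
def kyFanNorm {n : ℕ} (p : ℕ) (A : Matrix (Fin n) (Fin n) ℝ) : ℝ :=
  ∑ i ∈ Finset.range p, singVal A (i + 1)

/-! ### Gaussian vectors -/

section GaussianVectors

variable {ι κ κ' : Type*} [Fintype κ]

lemma measurable_const_mulVec (M : Matrix ι κ ℝ) : Measurable fun g : κ → ℝ => M *ᵥ g :=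
  measurable_pi_lambda _ fun _ => Finset.measurable_sum _ fun j _ =>
    (measurable_pi_apply j).const_mul _

variable [Fintype ι] [Fintype κ']

instance : IsProbabilityMeasure (stdGaussian ι) :=
  inferInstanceAs (IsProbabilityMeasure (Measure.pi fun _ => gaussianReal 0 1))

lemma lintegral_prod_stdGaussian {f : ι → ℝ → ℝ≥0∞} (hf : ∀ i, Measurable (f i)) :
    ∫⁻ g, ∏ i, f i (g i) ∂(stdGaussian ι) = ∏ i, ∫⁻ x, f i x ∂(gaussianReal 0 1) := by
  rw [_root_.stdGaussian, lintegral_prod_eq_prod_lintegral_of_indepFun Finset.univ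
    (fun i (g : ι → ℝ) => f i (g i)) (iIndepFun_pi fun i => (hf i).aemeasurable)
    (fun i => (hf i).comp (measurable_pi_apply i))]
  exact Finset.prod_congr rfl fun i _ =>
    (measurePreserving_eval (fun _ : ι => gaussianReal 0 1) i).lintegral_comp (hf i)

lemma gaussianReal_eq_withDensity (y : ℝ) :
    gaussianReal y 1 = (gaussianReal 0 1).withDensity
      fun x => ENNReal.ofReal (Real.exp (y * x - y * y / 2)) := by
  rw [gaussianReal_of_var_ne_zero _ one_ne_zero, gaussianReal_of_var_ne_zero _ one_ne_zero,
    ← withDensity_mul _ (measurable_gaussianPDF _ _) (by fun_prop)]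
  congr with x
  rw [Pi.mul_apply, gaussianPDF, gaussianPDF, ← ENNReal.ofReal_mul (gaussianPDFReal_nonneg _ _ _)]
  simp only [gaussianPDFReal, mul_assoc, ← Real.exp_add, NNReal.coe_one]
  ring_nf

lemma map_const_add_stdGaussian (y : ι → ℝ) :
    (stdGaussian ι).map (fun g => y + g) = Measure.pi fun i => gaussianReal (y i) 1 := by
  have h := Measure.pi_map_pi (μ := fun _ : ι => gaussianReal 0 1) (f := fun i x => y i + x)
    fun i => by fun_prop
  simp_rw [gaussianReal_map_const_add, zero_add] at h
  exact h

lemma pi_gaussianReal_eq_withDensity (y : ι → ℝ) :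
    (Measure.pi fun i => gaussianReal (y i) 1) = (stdGaussian ι).withDensity
      fun g => ENNReal.ofReal (Real.exp (y ⬝ᵥ g - y ⬝ᵥ y / 2)) := by
  set f : ι → ℝ → ℝ≥0∞ := fun i x => ENNReal.ofReal (Real.exp (y i * x - y i * y i / 2))
  have density_eq_prod (g : ι → ℝ) :
      ENNReal.ofReal (Real.exp (y ⬝ᵥ g - y ⬝ᵥ y / 2)) = ∏ i, f i (g i) := by
    rw [← ENNReal.ofReal_prod_of_nonneg fun _ _ => (Real.exp_pos _).le, ← Real.exp_sum,
      dotProduct, dotProduct, Finset.sum_sub_distrib, Finset.sum_div]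
  refine Measure.pi_eq fun s hs => ?_
  have indicator_eq_prod (g : ι → ℝ) : (Set.univ.pi s).indicator (fun g => ∏ i, f i (g i)) g =
      ∏ i, (s i).indicator (f i) (g i) := by
    by_cases hg : ∀ i, g i ∈ s i
    · simp only [Set.indicator_of_mem (Set.mem_univ_pi.2 hg), Set.indicator_of_mem (hg _)]
    · rw [Set.indicator_of_notMem (mt Set.mem_univ_pi.1 hg)]
      obtain ⟨i, hi⟩ := not_forall.1 hg
      exact (Finset.prod_eq_zero (Finset.mem_univ i) (Set.indicator_of_notMem hi _)).symm
  rw [withDensity_apply _ (MeasurableSet.univ_pi hs), ← lintegral_indicator (.univ_pi hs)]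
  simp_rw [density_eq_prod, indicator_eq_prod]
  rw [lintegral_prod_stdGaussian fun i => Measurable.indicator (by fun_prop) (hs i)]
  refine Finset.prod_congr rfl fun i _ => ?_
  rw [lintegral_indicator (hs i), gaussianReal_eq_withDensity (y i), withDensity_apply _ (hs i)]

/-- The **Cameron–Martin formula** for a standard Gaussian vector. -/
theorem lintegral_const_add_stdGaussian (y : ι → ℝ) {F : (ι → ℝ) → ℝ≥0∞} (hF : Measurable F) :
    ∫⁻ g, F (y + g) ∂(stdGaussian ι) =
      ∫⁻ g, F g * ENNReal.ofReal (Real.exp (y ⬝ᵥ g - y ⬝ᵥ y / 2)) ∂(stdGaussian ι) := by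
  rw [← lintegral_map hF (measurable_const_add y), map_const_add_stdGaussian,
    pi_gaussianReal_eq_withDensity, lintegral_withDensity_eq_lintegral_mul _ _ hF]
  · simp only [Pi.mul_apply, mul_comm]
  · unfold dotProduct; fun_prop

lemma lintegral_exp_dotProduct_stdGaussian (y : ι → ℝ) :
    ∫⁻ g, ENNReal.ofReal (Real.exp (y ⬝ᵥ g)) ∂(stdGaussian ι)
      = ENNReal.ofReal (Real.exp (y ⬝ᵥ y / 2)) := by
  have h := lintegral_const_add_stdGaussian y
    (measurable_const (a := ENNReal.ofReal (Real.exp (y ⬝ᵥ y / 2))))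
  simp_rw [lintegral_const, measure_univ, mul_one, ← ENNReal.ofReal_mul (Real.exp_pos _).le,
    ← Real.exp_add, add_sub_cancel] at h
  exact h.symm

lemma integral_cexp_dotProduct_stdGaussian (y : ι → ℝ) :
    ∫ g, Complex.exp (((y ⬝ᵥ g : ℝ) : ℂ) * Complex.I) ∂(stdGaussian ι) =
      Complex.exp (-((y ⬝ᵥ y : ℝ) : ℂ) / 2) := by
  simp_rw [dotProduct, Complex.ofReal_sum, Finset.sum_mul, Complex.exp_sum]
  rw [_root_.stdGaussian, integral_fintype_prod_eq_prod
    (f := fun i x => Complex.exp (((y i * x : ℝ) : ℂ) * Complex.I))]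
  simp_rw [Complex.ofReal_mul, ← charFun_apply_real, charFun_gaussianReal, ← Complex.exp_sum]
  congr 1
  simp [Finset.sum_neg_distrib, Finset.sum_div, neg_div, sq]

lemma map_mulVec_stdGaussian {M : Matrix ι κ ℝ} (hM : M * Mᵀ = 1) :
    (stdGaussian κ).map (fun g => M *ᵥ g) = stdGaussian ι := by
  have hmeas := measurable_const_mulVec M
  have := Measure.isProbabilityMeasure_map (μ := stdGaussian κ) hmeas.aemeasurable
  refine Measure.ext_of_charFunDual (funext fun L => ?_)
  obtain ⟨l, hl⟩ := (dotProductEquiv ℝ ι).surjective (L : (ι → ℝ) →ₗ[ℝ] ℝ)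
  have hL (v : ι → ℝ) : L v = l ⬝ᵥ v := (LinearMap.congr_fun hl v).symm
  simp_rw [charFunDual_apply]
  rw [integral_map hmeas.aemeasurable (by fun_prop)]
  simp_rw [hL, dotProduct_mulVec, integral_cexp_dotProduct_stdGaussian]
  rw [← dotProduct_mulVec, ← mulVec_transpose, mulVec_mulVec, hM, one_mulVec]

lemma lintegral_mulVec_add_mulVec_stdGaussian {A : Matrix ι κ ℝ} {B : Matrix ι κ' ℝ}
    (hAB : A * Aᵀ + B * Bᵀ = 1) {F : (ι → ℝ) → ℝ≥0∞} (hF : Measurable F) :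
    ∫⁻ g, ∫⁻ g', F (A *ᵥ g + B *ᵥ g') ∂(stdGaussian κ') ∂(stdGaussian κ) =
      ∫⁻ g, F g ∂(stdGaussian ι) := by
  have hM : fromCols A B * (fromCols A B)ᵀ = 1 := by
    rw [transpose_fromCols, fromCols_mul_fromRows, hAB]
  have hpres : MeasurePreserving (MeasurableEquiv.sumPiEquivProdPi fun _ : κ ⊕ κ' => ℝ)
      (stdGaussian (κ ⊕ κ')) ((stdGaussian κ).prod (stdGaussian κ')) :=
    measurePreserving_sumPiEquivProdPi fun _ => gaussianReal 0 1
  have hmeas : Measurable fun p : (κ → ℝ) × (κ' → ℝ) => F (A *ᵥ p.1 + B *ᵥ p.2) :=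
    hF.comp (((measurable_const_mulVec A).comp measurable_fst).add
      ((measurable_const_mulVec B).comp measurable_snd))
  rw [← lintegral_prod _ hmeas.aemeasurable, ← hpres.lintegral_comp hmeas,
    ← map_mulVec_stdGaussian hM, lintegral_map hF (measurable_const_mulVec _)]
  refine lintegral_congr fun g => ?_
  rw [fromCols_mulVec]
  rfl

end GaussianVectors

/-! ### Random sign vectors and their tensor products -/

section RandomSigns

variable {ι κ ρ : Type*} [Fintype ι] [Fintype κ] [Fintype ρ]

/-- The `±1` vector encoded by a Boolean vector. Averages over uniformly random sign vectors are
written as finite sums over the Boolean vectors. -/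
def signVec (s : κ → Bool) : κ → ℝ := fun i => if s i then 1 else -1

lemma signVec_dotProduct_self (s : κ → Bool) : signVec s ⬝ᵥ signVec s = Fintype.card κ := by
  have sq_eq_one (i : κ) : signVec s i * signVec s i = 1 := by
    unfold signVec; split_ifs <;> norm_num
  simp only [dotProduct, sq_eq_one, Finset.sum_const, nsmul_eq_mul, mul_one, Finset.card_univ]

lemma sum_exp_dotProduct_signVec_eq_prod_cosh (y : κ → ℝ) :
    ∑ s : κ → Bool, Real.exp (y ⬝ᵥ signVec s) = ∏ i, 2 * Real.cosh (y i) := by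
  have h := Finset.prod_univ_sum (fun _ : κ => (Finset.univ : Finset Bool))
    fun i b => Real.exp (y i * if b then 1 else -1)
  simp only [Fintype.piFinset_univ, ← Real.exp_sum, Fintype.sum_bool, if_true,
    Bool.false_eq_true, if_false, mul_one, mul_neg] at h
  simp only [Real.cosh_eq, mul_div_cancel₀ _ (two_ne_zero' ℝ)]
  exact h.symm

lemma sum_exp_dotProduct_signVec_le (y : κ → ℝ) :
    ∑ s : κ → Bool, Real.exp (y ⬝ᵥ signVec s) ≤
      2 ^ Fintype.card κ * Real.exp (y ⬝ᵥ y / 2) := by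
  rw [sum_exp_dotProduct_signVec_eq_prod_cosh, Finset.prod_mul_distrib, Finset.prod_const,
    Finset.card_univ]
  gcongr
  calc ∏ i, Real.cosh (y i) ≤ ∏ i, Real.exp (y i ^ 2 / 2) :=
        Finset.prod_le_prod (fun i _ => (Real.cosh_pos _).le)
          (fun i _ => Real.cosh_le_exp_half_sq _)
    _ = Real.exp (y ⬝ᵥ y / 2) := by
        rw [← Real.exp_sum, ← Finset.sum_div]; simp only [dotProduct, sq]

lemma lintegral_exp_mul_sq_gaussianReal {a : ℝ} (ha : a < 1 / 2) :
    ∫⁻ x, ENNReal.ofReal (Real.exp (a * x ^ 2)) ∂(gaussianReal 0 1) =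
      ENNReal.ofReal (√(1 - 2 * a))⁻¹ := by
  have hb : 0 < 1 / 2 - a := by linarith
  have integrand_eq (x : ℝ) : (gaussianPDF 0 1 * fun x => ENNReal.ofReal (Real.exp (a * x ^ 2))) x =
      ENNReal.ofReal ((√(2 * Real.pi))⁻¹ * Real.exp (-(1 / 2 - a) * x ^ 2)) := by
    rw [Pi.mul_apply, gaussianPDF, ← ENNReal.ofReal_mul (gaussianPDFReal_nonneg _ _ _)]
    simp only [gaussianPDFReal, mul_assoc, ← Real.exp_add, NNReal.coe_one, mul_one]
    ring_nf
  rw [gaussianReal_of_var_ne_zero _ one_ne_zero,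
    lintegral_withDensity_eq_lintegral_mul _ (measurable_gaussianPDF _ _) (by fun_prop)]
  simp_rw [integrand_eq]
  rw [← ofReal_integral_eq_lintegral_ofReal ((integrable_exp_neg_mul_sq hb).const_mul _)
    (.of_forall fun x => by positivity), integral_const_mul, integral_gaussian, ← Real.sqrt_inv,
    ← Real.sqrt_mul (by positivity), ← Real.sqrt_inv]
  congr 2
  have h2a : 1 - 2 * a ≠ 0 := by linarith
  field_simp

lemma lintegral_exp_mul_sq_gaussianReal_le {a : ℝ} (h0 : 0 ≤ a) (h1 : a ≤ 1 / 4) :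
    ∫⁻ x, ENNReal.ofReal (Real.exp (a * x ^ 2)) ∂(gaussianReal 0 1)
      ≤ ENNReal.ofReal (Real.exp (2 * a)) := by
  rw [lintegral_exp_mul_sq_gaussianReal (by linarith)]
  refine ENNReal.ofReal_le_ofReal (inv_le_of_inv_le₀ (Real.exp_pos _) ?_)
  rw [← Real.exp_neg]
  refine Real.le_sqrt_of_sq_le ?_
  rw [← Real.exp_nat_mul]
  have h := Real.add_one_le_exp (4 * a)
  rw [show ((2 : ℕ) : ℝ) * -(2 * a) = -(4 * a) by push_cast; ring, Real.exp_neg]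
  refine inv_le_of_inv_le₀ (by linarith) (le_trans ?_ h)
  rw [inv_le_iff_one_le_mul₀ (by linarith)]
  nlinarith

/-- The square `|M s|²` is linearised by an auxiliary Gaussian vector `w`; the signs are then
summed out, and since `M Mᵀ` is diagonal the remaining integral over `w` factorises. -/
lemma sum_exp_mulVec_signVec_le {M : Matrix ρ κ ℝ} {d : ρ → ℝ} (hM : M * Mᵀ = diagonal d)
    (hd0 : ∀ i, 0 ≤ d i) (hd : ∀ i, d i ≤ 1 / 4) :
    ∑ s : κ → Bool, Real.exp ((M *ᵥ signVec s) ⬝ᵥ (M *ᵥ signVec s)) ≤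
      2 ^ Fintype.card κ * Real.exp (2 * ∑ i, d i) := by
  have two_eq : √2 * √2 = (2 : ℝ) := Real.mul_self_sqrt zero_le_two
  have linearise (s : κ → Bool) :
      ENNReal.ofReal (Real.exp ((M *ᵥ signVec s) ⬝ᵥ (M *ᵥ signVec s))) =
        ∫⁻ w, ENNReal.ofReal (Real.exp ((√2 • (w ᵥ* M)) ⬝ᵥ signVec s)) ∂(stdGaussian ρ) := by
    have h := lintegral_exp_dotProduct_stdGaussian (√2 • (M *ᵥ signVec s))
    simp_rw [smul_dotProduct, dotProduct_smul, smul_eq_mul, ← mul_assoc, two_eq,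
      mul_div_cancel_left₀ _ (two_ne_zero' ℝ)] at h
    simp_rw [← h, smul_dotProduct, smul_eq_mul, ← dotProduct_mulVec, dotProduct_comm]
  have sum_signs (w : ρ → ℝ) :
      ∑ s : κ → Bool, ENNReal.ofReal (Real.exp ((√2 • (w ᵥ* M)) ⬝ᵥ signVec s)) ≤
        ENNReal.ofReal (2 ^ Fintype.card κ) * ∏ i, ENNReal.ofReal (Real.exp (d i * w i ^ 2)) := by
    rw [← ENNReal.ofReal_sum_of_nonneg fun _ _ => (Real.exp_pos _).le,
      ← ENNReal.ofReal_prod_of_nonneg fun _ _ => (Real.exp_pos _).le,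
      ← ENNReal.ofReal_mul (by positivity), ← Real.exp_sum]
    refine ENNReal.ofReal_le_ofReal ((sum_exp_dotProduct_signVec_le _).trans_eq ?_)
    rw [smul_dotProduct, dotProduct_smul, smul_eq_mul, smul_eq_mul, ← mul_assoc, two_eq,
      mul_div_cancel_left₀ _ (two_ne_zero' ℝ), ← dotProduct_mulVec, ← mulVec_transpose,
      mulVec_mulVec, hM]
    simp only [dotProduct, mulVec_diagonal, sq, mul_left_comm]
  rw [← ENNReal.ofReal_le_ofReal_iff (by positivity),
    ENNReal.ofReal_sum_of_nonneg fun _ _ => (Real.exp_pos _).le]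
  simp_rw [linearise]
  rw [← lintegral_finsetSum _ fun s _ => by unfold dotProduct vecMul; fun_prop]
  calc ∫⁻ w, ∑ s : κ → Bool, ENNReal.ofReal (Real.exp ((√2 • (w ᵥ* M)) ⬝ᵥ signVec s))
        ∂(stdGaussian ρ)
      ≤ ∫⁻ w, ENNReal.ofReal (2 ^ Fintype.card κ) *
          ∏ i, ENNReal.ofReal (Real.exp (d i * w i ^ 2)) ∂(stdGaussian ρ) :=
        lintegral_mono sum_signs
    _ ≤ ENNReal.ofReal (2 ^ Fintype.card κ) * ∏ i, ENNReal.ofReal (Real.exp (2 * d i)) := by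
        rw [lintegral_const_mul _ (by fun_prop), lintegral_prod_stdGaussian
          (f := fun i x => ENNReal.ofReal (Real.exp (d i * x ^ 2))) fun i => by fun_prop]
        gcongr with i
        exact lintegral_exp_mul_sq_gaussianReal_le (hd0 i) (hd i)
    _ = ENNReal.ofReal (2 ^ Fintype.card κ * Real.exp (2 * ∑ i, d i)) := by
        rw [← ENNReal.ofReal_prod_of_nonneg fun _ _ => (Real.exp_pos _).le, ← Real.exp_sum,
          ← ENNReal.ofReal_mul (by positivity), Finset.mul_sum]

lemma exists_eq_transpose_mul_self_of_posSemidef {S : Matrix κ κ ℝ} (hS : S.PosSemidef) :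
    ∃ M : Matrix κ κ ℝ, S = Mᵀ * M ∧ M * Mᵀ = diagonal hS.1.eigenvalues := by
  set U : Matrix κ κ ℝ := hS.1.eigenvectorUnitary.1
  have hU : Uᵀ * U = 1 := by
    simpa only [star_eq_conjTranspose, conjTranspose_eq_transpose_of_trivial] using
      Unitary.coe_star_mul_self hS.1.eigenvectorUnitary
  have spectral : S = U * diagonal hS.1.eigenvalues * Uᵀ := by
    have h := hS.1.spectral_theorem
    rwa [Unitary.conjStarAlgAut_apply, star_eq_conjTranspose,
      conjTranspose_eq_transpose_of_trivial] at h
  set E : Matrix κ κ ℝ := diagonal fun i => √(hS.1.eigenvalues i)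
  have hE : E * E = diagonal hS.1.eigenvalues := by
    simp only [E, diagonal_mul_diagonal, Real.mul_self_sqrt (hS.eigenvalues_nonneg _)]
  have hEt : Eᵀ = E := diagonal_transpose _
  refine ⟨E * Uᵀ, ?_, ?_⟩ <;> rw [transpose_mul, transpose_transpose, hEt]
  · rw [Matrix.mul_assoc, ← Matrix.mul_assoc E, hE, ← Matrix.mul_assoc, ← spectral]
  · rw [Matrix.mul_assoc, ← Matrix.mul_assoc Uᵀ, hU, Matrix.one_mul, hE]

lemma eigenvalues_le_of_forall_dotProduct_mulVec_le {S : Matrix κ κ ℝ} (hS : S.IsHermitian) {c : ℝ}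
    (hc : ∀ x, x ⬝ᵥ S *ᵥ x ≤ c * (x ⬝ᵥ x)) (i : κ) : hS.eigenvalues i ≤ c := by
  set v := hS.eigenvectorBasis i
  have hv : v.ofLp ⬝ᵥ v.ofLp = 1 := by
    rw [dotProduct_comm]
    exact (real_inner_self_eq_norm_sq v).trans (by
      rw [hS.eigenvectorBasis.orthonormal.1 i, one_pow])
  have h := hc v.ofLp
  rw [hv, mul_one] at h
  rw [hS.eigenvalues_eq]
  simpa using h

lemma sum_exp_quadraticForm_signVec_le {S : Matrix κ κ ℝ} (hS : S.PosSemidef)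
    (hS4 : ∀ x, x ⬝ᵥ S *ᵥ x ≤ 1 / 4 * (x ⬝ᵥ x)) :
    ∑ s : κ → Bool, Real.exp (signVec s ⬝ᵥ S *ᵥ signVec s) ≤
      2 ^ Fintype.card κ * Real.exp (2 * S.trace) := by
  obtain ⟨M, hMS, hM⟩ := exists_eq_transpose_mul_self_of_posSemidef hS
  have trace_eq : S.trace = ∑ i, hS.1.eigenvalues i := by
    nth_rw 1 [hMS]
    rw [trace_mul_comm, hM, trace_diagonal]
  have form_eq (x : κ → ℝ) : x ⬝ᵥ S *ᵥ x = (M *ᵥ x) ⬝ᵥ (M *ᵥ x) := by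
    nth_rw 1 [hMS]
    rw [← mulVec_mulVec, dotProduct_mulVec, vecMul_transpose]
  simp only [form_eq, trace_eq]
  exact sum_exp_mulVec_signVec_le hM hS.eigenvalues_nonneg
    (eigenvalues_le_of_forall_dotProduct_mulVec_le hS.1 hS4)

end RandomSigns

section SignTensors

variable {ι κ : Type*}

/-- The tensor product `u ⊗ v` of two vectors, as a vector indexed by pairs. -/
def tensorVec (u : ι → ℝ) (v : κ → ℝ) : ι × κ → ℝ := fun p => u p.1 * v p.2

lemma tensorVec_dotProduct_tensorVec [Fintype ι] [Fintype κ] (u u' : ι → ℝ) (v v' : κ → ℝ) :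
    tensorVec u v ⬝ᵥ tensorVec u' v' = (u ⬝ᵥ u') * (v ⬝ᵥ v') := by
  simp only [tensorVec, dotProduct, Fintype.sum_prod_type, Finset.sum_mul_sum, mul_mul_mul_comm]

/-- The matrix of the linear map `u ↦ u ⊗ v`. -/
def tensorRight (ι : Type*) (v : κ → ℝ) : Matrix (ι × κ) ι ℝ :=
  Matrix.of fun p a => if p.1 = a then v p.2 else 0

lemma tensorRight_mulVec [Fintype ι] (u : ι → ℝ) (v : κ → ℝ) :
    tensorRight ι v *ᵥ u = tensorVec u v := by
  ext p
  simp [tensorRight, tensorVec, mulVec, dotProduct, mul_comm]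

lemma dotProduct_conj_tensorRight_mulVec [Fintype ι] [Fintype κ] (P : Matrix (ι × κ) (ι × κ) ℝ)
    (u : ι → ℝ) (v : κ → ℝ) :
    u ⬝ᵥ ((tensorRight ι v)ᵀ * P * tensorRight ι v) *ᵥ u =
      tensorVec u v ⬝ᵥ P *ᵥ tensorVec u v := by
  rw [← mulVec_mulVec, ← mulVec_mulVec, tensorRight_mulVec, dotProduct_mulVec, vecMul_transpose,
    tensorRight_mulVec]

/-- The trace of `P` over the first tensor factor. -/
def partialTrace [Fintype ι] (P : Matrix (ι × κ) (ι × κ) ℝ) : Matrix κ κ ℝ :=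
  ∑ a, P.submatrix (Prod.mk a) (Prod.mk a)

lemma trace_partialTrace [Fintype ι] [Fintype κ] (P : Matrix (ι × κ) (ι × κ) ℝ) :
    (partialTrace P).trace = P.trace := by
  rw [partialTrace, trace_sum]
  simp only [trace, diag_apply, submatrix_apply, Fintype.sum_prod_type]

lemma posSemidef_partialTrace [Fintype ι] {P : Matrix (ι × κ) (ι × κ) ℝ}
    (hP : P.PosSemidef) : (partialTrace P).PosSemidef :=
  posSemidef_sum _ fun _ _ => hP.submatrix _

lemma dotProduct_submatrix_mulVec [Fintype ι] [Fintype κ] (P : Matrix (ι × κ) (ι × κ) ℝ)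
    (a : ι) (v : κ → ℝ) :
    v ⬝ᵥ P.submatrix (Prod.mk a) (Prod.mk a) *ᵥ v =
      tensorVec (Pi.single a 1) v ⬝ᵥ P *ᵥ tensorVec (Pi.single a 1) v := by
  simp [dotProduct, mulVec, tensorVec, Fintype.sum_prod_type, Pi.single_apply, Finset.sum_ite_irrel]

lemma dotProduct_partialTrace_mulVec [Fintype ι] [Fintype κ] (P : Matrix (ι × κ) (ι × κ) ℝ)
    (v : κ → ℝ) :
    v ⬝ᵥ partialTrace P *ᵥ v =
      ∑ a, tensorVec (Pi.single a 1) v ⬝ᵥ P *ᵥ tensorVec (Pi.single a 1) v := by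
  simp only [partialTrace, sum_mulVec, dotProduct_sum, dotProduct_submatrix_mulVec]

lemma trace_conj_tensorRight [Fintype ι] [Fintype κ] (P : Matrix (ι × κ) (ι × κ) ℝ)
    (v : κ → ℝ) :
    ((tensorRight ι v)ᵀ * P * tensorRight ι v).trace = v ⬝ᵥ partialTrace P *ᵥ v := by
  rw [dotProduct_partialTrace_mulVec, trace]
  refine Finset.sum_congr rfl fun a _ => ?_
  rw [← dotProduct_conj_tensorRight_mulVec, single_one_dotProduct, mulVec_single_one, col_apply,
    diag_apply]

lemma dotProduct_partialTrace_mulVec_le [Fintype ι] [Fintype κ] {P : Matrix (ι × κ) (ι × κ) ℝ}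
    {c : ℝ} (hPc : ∀ x, x ⬝ᵥ P *ᵥ x ≤ c * (x ⬝ᵥ x)) (v : κ → ℝ) :
    v ⬝ᵥ partialTrace P *ᵥ v ≤ Fintype.card ι * (c * (v ⬝ᵥ v)) := by
  have block_le (a : ι) :
      tensorVec (Pi.single a 1) v ⬝ᵥ P *ᵥ tensorVec (Pi.single a 1) v ≤ c * (v ⬝ᵥ v) :=
    (hPc _).trans_eq (by
      rw [tensorVec_dotProduct_tensorVec, single_one_dotProduct, Pi.single_eq_same, one_mul])
  rw [dotProduct_partialTrace_mulVec, ← nsmul_eq_mul, ← Finset.card_univ]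
  exact Finset.sum_le_card_nsmul _ _ _ fun a _ => block_le a

lemma sum_exp_quadraticForm_tensorVec_signVec_fst_le [Fintype ι] [Fintype κ]
    {P : Matrix (ι × κ) (ι × κ) ℝ} (hP : P.PosSemidef) {c : ℝ}
    (hPc : ∀ x, x ⬝ᵥ P *ᵥ x ≤ c * (x ⬝ᵥ x)) {v : κ → ℝ} (hv : 4 * (c * (v ⬝ᵥ v)) ≤ 1) :
    ∑ u : ι → Bool, Real.exp (tensorVec (signVec u) v ⬝ᵥ P *ᵥ tensorVec (signVec u) v) ≤
      2 ^ Fintype.card ι * Real.exp (v ⬝ᵥ ((2 : ℝ) • partialTrace P) *ᵥ v) := by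
  have psd : ((tensorRight ι v)ᵀ * P * tensorRight ι v).PosSemidef :=
    hP.conjTranspose_mul_mul_same _
  have h := sum_exp_quadraticForm_signVec_le psd fun x => by
    rw [dotProduct_conj_tensorRight_mulVec]
    refine (hPc _).trans ?_
    rw [tensorVec_dotProduct_tensorVec]
    have hx : 0 ≤ x ⬝ᵥ x := dotProduct_star_self_nonneg x
    nlinarith
  simpa only [dotProduct_conj_tensorRight_mulVec, trace_conj_tensorRight, smul_mulVec,
    dotProduct_smul, smul_eq_mul] using h

/-- The two sign vectors are averaged out one after the other; averaging over the first one leaves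
a quadratic form in the second one, given by a partial trace. -/
lemma sum_exp_quadraticForm_tensorVec_signVec_le [Fintype ι] [Fintype κ]
    {P : Matrix (ι × κ) (ι × κ) ℝ} (hP : P.PosSemidef) {c : ℝ}
    (hPc : ∀ x, x ⬝ᵥ P *ᵥ x ≤ c * (x ⬝ᵥ x)) (hι : 8 * (c * Fintype.card ι) ≤ 1)
    (hκ : 4 * (c * Fintype.card κ) ≤ 1) :
    ∑ s : (ι → Bool) × (κ → Bool), Real.exp
        (tensorVec (signVec s.1) (signVec s.2) ⬝ᵥ P *ᵥ tensorVec (signVec s.1) (signVec s.2)) ≤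
      2 ^ Fintype.card ι * 2 ^ Fintype.card κ * Real.exp (4 * P.trace) := by
  have sum_fst (v : κ → Bool) :
      ∑ u : ι → Bool, Real.exp
          (tensorVec (signVec u) (signVec v) ⬝ᵥ P *ᵥ tensorVec (signVec u) (signVec v)) ≤
        2 ^ Fintype.card ι *
          Real.exp (signVec v ⬝ᵥ ((2 : ℝ) • partialTrace P) *ᵥ signVec v) :=
    sum_exp_quadraticForm_tensorVec_signVec_fst_le hP hPc (by rwa [signVec_dotProduct_self])
  have sum_snd := sum_exp_quadraticForm_signVec_le
    ((posSemidef_partialTrace hP).smul (zero_le_two (α := ℝ))) fun x => by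
      rw [smul_mulVec, dotProduct_smul, smul_eq_mul]
      have hx : 0 ≤ x ⬝ᵥ x := dotProduct_star_self_nonneg x
      nlinarith [dotProduct_partialTrace_mulVec_le hPc x]
  rw [trace_smul, trace_partialTrace, smul_eq_mul, ← mul_assoc,
    show (2 : ℝ) * 2 = 4 by norm_num] at sum_snd
  rw [Fintype.sum_prod_type_right]
  refine (Finset.sum_le_sum fun v _ => sum_fst v).trans ?_
  rw [← Finset.mul_sum, mul_assoc]
  gcongr

end SignTensors

/-! ### Measurable orthonormalization -/

section MatrixMeasurability

variable {α m n : Type*}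

instance matrixMeasurableSpace : MeasurableSpace (Matrix m n ℝ) :=
  inferInstanceAs (MeasurableSpace (m → n → ℝ))

variable [MeasurableSpace α]

lemma measurable_matrix_iff {f : α → Matrix m n ℝ} :
    Measurable f ↔ ∀ i j, Measurable fun a => f a i j := by
  have entries : Measurable f ↔ Measurable fun a i j => f a i j := Iff.rfl
  simp only [entries, measurable_pi_iff]

lemma measurable_dotProduct [Fintype n] {x y : α → n → ℝ} (hx : Measurable x) (hy : Measurable y) :
    Measurable fun a => x a ⬝ᵥ y a :=
  Finset.measurable_sum _ fun j _ => (measurable_pi_iff.1 hx j).mul (measurable_pi_iff.1 hy j)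

lemma measurable_mulVec [Fintype n] {M : α → Matrix m n ℝ} {x : α → n → ℝ} (hM : Measurable M)
    (hx : Measurable x) : Measurable fun a => M a *ᵥ x a :=
  measurable_pi_lambda _ fun i => measurable_dotProduct ((measurable_pi_apply i).comp hM) hx

end MatrixMeasurability

section GramSchmidt

variable {ι ρ : Type*} [Fintype ι] {P : Matrix ι ι ℝ}

lemma transpose_eq_of_isStarProjection (hP : IsStarProjection P) : Pᵀ = P := hP.isSelfAdjoint

lemma dotProduct_mulVec_comm_of_isStarProjection (hP : IsStarProjection P) (x y : ι → ℝ) :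
    x ⬝ᵥ P *ᵥ y = (P *ᵥ x) ⬝ᵥ y := by
  rw [dotProduct_mulVec, ← mulVec_transpose, transpose_eq_of_isStarProjection hP]

lemma dotProduct_mulVec_self_of_isStarProjection (hP : IsStarProjection P) (x : ι → ℝ) :
    x ⬝ᵥ P *ᵥ x = (P *ᵥ x) ⬝ᵥ (P *ᵥ x) := by
  rw [← dotProduct_mulVec_comm_of_isStarProjection hP, mulVec_mulVec, hP.isIdempotentElem.eq]

lemma posSemidef_of_isStarProjection (hP : IsStarProjection P) : P.PosSemidef := by
  have h := posSemidef_conjTranspose_mul_self P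
  rwa [← star_eq_conjTranspose, hP.isSelfAdjoint.star_eq, hP.isIdempotentElem.eq] at h

lemma dotProduct_mulVec_le_of_isStarProjection (hP : IsStarProjection P) (x : ι → ℝ) :
    x ⬝ᵥ P *ᵥ x ≤ x ⬝ᵥ x := by
  have h : 0 ≤ x ⬝ᵥ (1 - P) *ᵥ x :=
    (posSemidef_of_isStarProjection hP.one_sub).dotProduct_mulVec_nonneg x
  rwa [sub_mulVec, one_mulVec, dotProduct_sub, sub_nonneg] at h

/-- The orthogonal projection onto the line spanned by `w`; it is `0` for `w = 0`, where `0⁻¹ = 0`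
in the normalisation. -/
def lineProjection (w : ι → ℝ) : Matrix ι ι ℝ := (w ⬝ᵥ w)⁻¹ • vecMulVec w w

lemma lineProjection_mulVec_self (w : ι → ℝ) : lineProjection w *ᵥ w = w := by
  rcases eq_or_ne w 0 with rfl | hw
  · exact mulVec_zero _
  · rw [lineProjection, smul_mulVec, vecMulVec_mulVec, op_smul_eq_smul, smul_smul,
      inv_mul_cancel₀ (mt dotProduct_self_eq_zero.1 hw), one_smul]

lemma isStarProjection_lineProjection (w : ι → ℝ) : IsStarProjection (lineProjection w) where
  isIdempotentElem := by
    unfold IsIdempotentElem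
    nth_rw 2 [lineProjection]
    rw [mul_smul_comm, mul_vecMulVec, lineProjection_mulVec_self, lineProjection]
  isSelfAdjoint := by
    change (lineProjection w)ᵀ = lineProjection w
    rw [lineProjection, transpose_smul, transpose_vecMulVec]

lemma trace_lineProjection_le (w : ι → ℝ) : (lineProjection w).trace ≤ 1 := by
  rw [lineProjection, trace_smul, trace_vecMulVec, smul_eq_mul]
  exact inv_mul_le_one

lemma mul_lineProjection_eq_zero {w : ι → ℝ} (hw : P *ᵥ w = 0) : P * lineProjection w = 0 := by
  rw [lineProjection, mul_smul_comm, mul_vecMulVec, hw, zero_vecMulVec, smul_zero]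

lemma lineProjection_mul_eq_zero (hP : IsStarProjection P) {w : ι → ℝ} (hw : P *ᵥ w = 0) :
    lineProjection w * P = 0 := by
  rw [← transpose_eq_zero, transpose_mul, transpose_eq_of_isStarProjection hP,
    transpose_eq_of_isStarProjection (isStarProjection_lineProjection w),
    mul_lineProjection_eq_zero hw]

/-- One Gram–Schmidt step: the orthogonal projection onto the span of the range of the projection
`P` and of `q`. -/
def gramSchmidtStep (P : Matrix ι ι ℝ) (q : ι → ℝ) : Matrix ι ι ℝ :=
  P + lineProjection ((1 - P) *ᵥ q)

lemma mulVec_one_sub_mulVec_eq_zero (hP : IsStarProjection P) (q : ι → ℝ) :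
    P *ᵥ ((1 - P) *ᵥ q) = 0 := by
  rw [mulVec_mulVec, hP.mul_one_sub_self, zero_mulVec]

lemma isStarProjection_gramSchmidtStep (hP : IsStarProjection P) (q : ι → ℝ) :
    IsStarProjection (gramSchmidtStep P q) :=
  hP.add (isStarProjection_lineProjection _)
    (mul_lineProjection_eq_zero (mulVec_one_sub_mulVec_eq_zero hP q))

lemma gramSchmidtStep_mul (hP : IsStarProjection P) (q : ι → ℝ) :
    gramSchmidtStep P q * P = P := by
  rw [gramSchmidtStep, Matrix.add_mul, hP.isIdempotentElem.eq,
    lineProjection_mul_eq_zero hP (mulVec_one_sub_mulVec_eq_zero hP q), add_zero]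

lemma gramSchmidtStep_mulVec_self (hP : IsStarProjection P) (q : ι → ℝ) :
    gramSchmidtStep P q *ᵥ q = q := by
  set w := (1 - P) *ᵥ q with hw
  have split : q = P *ᵥ q + w := by rw [hw, ← add_mulVec, add_sub_cancel, one_mulVec]
  have hPw : P *ᵥ w = 0 := mulVec_one_sub_mulVec_eq_zero hP q
  calc gramSchmidtStep P q *ᵥ q = P *ᵥ q + lineProjection w *ᵥ (P *ᵥ q + w) := by
        rw [gramSchmidtStep, add_mulVec, ← split]
    _ = q := by
        rw [mulVec_add, mulVec_mulVec, lineProjection_mul_eq_zero hP hPw, zero_mulVec, zero_add,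
          lineProjection_mulVec_self, ← split]

lemma trace_gramSchmidtStep_le (P : Matrix ι ι ℝ) (q : ι → ℝ) :
    (gramSchmidtStep P q).trace ≤ P.trace + 1 := by
  rw [gramSchmidtStep, trace_add]
  gcongr
  exact trace_lineProjection_le _

/-- The orthogonal projection onto the span of the range of the projection `P` and of the vectors
listed in `L`. It is defined by the Gram–Schmidt process so that it depends measurably on `P` and
on the vectors. -/
def extendProjection (P : Matrix ι ι ℝ) (L : List (ι → ℝ)) : Matrix ι ι ℝ :=
  L.foldl gramSchmidtStep P

lemma extendProjection_cons (P : Matrix ι ι ℝ) (q : ι → ℝ) (L : List (ι → ℝ)) :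
    extendProjection P (q :: L) = extendProjection (gramSchmidtStep P q) L := rfl

lemma isStarProjection_extendProjection (hP : IsStarProjection P) (L : List (ι → ℝ)) :
    IsStarProjection (extendProjection P L) := by
  induction L generalizing P with
  | nil => exact hP
  | cons q _ ih => exact ih (isStarProjection_gramSchmidtStep hP q)

lemma extendProjection_mul (hP : IsStarProjection P) (L : List (ι → ℝ)) :
    extendProjection P L * P = P := by
  induction L generalizing P with
  | nil => exact hP.isIdempotentElem.eq
  | cons q L ih =>
    rw [extendProjection_cons]
    nth_rw 2 [← gramSchmidtStep_mul hP q]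
    rw [← Matrix.mul_assoc, ih (isStarProjection_gramSchmidtStep hP q), gramSchmidtStep_mul hP]

lemma mul_extendProjection (hP : IsStarProjection P) (L : List (ι → ℝ)) :
    P * extendProjection P L = P := by
  have h := congrArg transpose (extendProjection_mul hP L)
  rwa [transpose_mul, transpose_eq_of_isStarProjection hP,
    transpose_eq_of_isStarProjection (isStarProjection_extendProjection hP L)] at h

lemma extendProjection_mulVec_of_mem (hP : IsStarProjection P) {L : List (ι → ℝ)} {q : ι → ℝ}
    (hq : q ∈ L) : extendProjection P L *ᵥ q = q := by
  induction L generalizing P with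
  | nil => exact absurd hq List.not_mem_nil
  | cons q' L ih =>
    have hP' := isStarProjection_gramSchmidtStep hP q'
    rcases List.mem_cons.1 hq with rfl | hq
    · rw [extendProjection_cons]
      nth_rw 2 [← gramSchmidtStep_mulVec_self hP q]
      rw [mulVec_mulVec, extendProjection_mul hP', gramSchmidtStep_mulVec_self hP]
    · exact ih hP' hq

lemma trace_extendProjection_le (P : Matrix ι ι ℝ) (L : List (ι → ℝ)) :
    (extendProjection P L).trace ≤ P.trace + L.length := by
  induction L generalizing P with
  | nil => simp [extendProjection]
  | cons q L ih =>
    have h := ih (gramSchmidtStep P q)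
    have h' := trace_gramSchmidtStep_le P q
    rw [extendProjection_cons, List.length_cons]
    push_cast
    linarith

lemma measurable_gramSchmidtStep {α : Type*} [MeasurableSpace α] {P : α → Matrix ι ι ℝ}
    {q : α → ι → ℝ} (hP : Measurable P) (hq : Measurable q) :
    Measurable fun a => gramSchmidtStep (P a) (q a) := by
  have hw : Measurable fun a => (1 - P a) *ᵥ q a :=
    measurable_mulVec (measurable_matrix_iff.2 fun i j =>
      measurable_const.sub (measurable_matrix_iff.1 hP i j)) hq
  have hwi (i : ι) : Measurable fun a => ((1 - P a) *ᵥ q a) i := measurable_pi_iff.1 hw i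
  exact measurable_matrix_iff.2 fun i j => (measurable_matrix_iff.1 hP i j).add
    ((measurable_dotProduct hw hw).inv.mul ((hwi i).mul (hwi j)))

lemma measurable_extendProjection {α : Type*} [MeasurableSpace α] {P : α → Matrix ι ι ℝ}
    {M : α → Matrix ρ ι ℝ} (hP : Measurable P) (hM : Measurable M) (L : List ρ) :
    Measurable fun a => extendProjection (P a) (L.map (M a).row) := by
  induction L generalizing P with
  | nil => exact hP
  | cons i _ ih =>
    exact ih (measurable_gramSchmidtStep hP ((measurable_pi_apply i).comp hM))

variable [Fintype ρ]

/-- The orthogonal projection onto the span of the range of the projection `P` and of the rows of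
`M`. -/
def extendByRows (P : Matrix ι ι ℝ) (M : Matrix ρ ι ℝ) : Matrix ι ι ℝ :=
  extendProjection P ((Finset.univ : Finset ρ).toList.map M.row)

lemma self_mul_extendByRows (hP : IsStarProjection P) (M : Matrix ρ ι ℝ) :
    M * extendByRows P M = M := by
  have hQ : IsStarProjection (extendByRows P M) := isStarProjection_extendProjection hP _
  rw [← transpose_eq_of_isStarProjection hQ]
  ext i j
  have h : extendByRows P M *ᵥ M i = M i := extendProjection_mulVec_of_mem hP
    (List.mem_map_of_mem (Finset.mem_toList.2 (Finset.mem_univ i)))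
  calc (M * (extendByRows P M)ᵀ) i j = (extendByRows P M *ᵥ M i) j := dotProduct_comm _ _
    _ = M i j := by rw [h]

lemma trace_extendByRows_le (P : Matrix ι ι ℝ) (M : Matrix ρ ι ℝ) :
    (extendByRows P M).trace ≤ P.trace + Fintype.card ρ := by
  have h := trace_extendProjection_le P (Finset.univ.toList.map M.row)
  rwa [List.length_map, Finset.length_toList, Finset.card_univ] at h

end GramSchmidt

/-! ### Adaptive systems on Gaussian vectors -/

section Resampling

variable {ι ρ : Type*} [Fintype ι] {P P' : Matrix ι ι ℝ}

/-- The vector `P g + (1 - P) g'`. For a projection `P` it replaces the part of `g` orthogonal to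
the range of `P` by that of `g'`. -/
def resample (P : Matrix ι ι ℝ) (g g' : ι → ℝ) : ι → ℝ := P *ᵥ g + (1 - P) *ᵥ g'

lemma measurable_resample {α : Type*} [MeasurableSpace α] {P : α → Matrix ι ι ℝ} {g g' : α → ι → ℝ}
    (hP : Measurable P) (hg : Measurable g) (hg' : Measurable g') :
    Measurable fun a => resample (P a) (g a) (g' a) :=
  (measurable_mulVec hP hg).add (measurable_mulVec (measurable_matrix_iff.2 fun i j =>
    measurable_const.sub (measurable_matrix_iff.1 hP i j)) hg')

lemma lintegral_resample_stdGaussian (hP : IsStarProjection P) {F : (ι → ℝ) → ℝ≥0∞}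
    (hF : Measurable F) :
    ∫⁻ g, ∫⁻ g', F (resample P g g') ∂(stdGaussian ι) ∂(stdGaussian ι) =
      ∫⁻ g, F g ∂(stdGaussian ι) := by
  refine lintegral_mulVec_add_mulVec_stdGaussian ?_ hF
  rw [transpose_eq_of_isStarProjection hP, transpose_eq_of_isStarProjection hP.one_sub,
    hP.isIdempotentElem.eq, hP.one_sub.isIdempotentElem.eq, add_sub_cancel]

lemma mulVec_resample {M : Matrix ρ ι ℝ} (hM : M * P = M) (g g' : ι → ℝ) :
    M *ᵥ resample P g g' = M *ᵥ g := by
  rw [resample, mulVec_add, mulVec_mulVec, mulVec_mulVec, Matrix.mul_sub, hM, Matrix.mul_one,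
    sub_self, zero_mulVec, add_zero]

lemma resample_resample (hP : P * P' = P) (hP' : P' * P = P) (g g' g'' : ι → ℝ) :
    resample P g (resample P' g' g'') = resample P' (resample P g g') g'' := by
  simp only [resample, mulVec_add, Matrix.mulVec_sub, mulVec_mulVec, Matrix.sub_mul,
    Matrix.one_mul, sub_mulVec, one_mulVec, hP, hP']
  abel

/-- The part of `log (d(y + g) / d(g))` that depends on `g` only through its projection `P g`; it
is the logarithm of the likelihood ratio, under the shift by `y`, of any statistic that determines
`P` and `P g` but leaves the orthogonal part of `g` Gaussian. -/
def logLikelihoodRatio (P : Matrix ι ι ℝ) (y g : ι → ℝ) : ℝ := (P *ᵥ y) ⬝ᵥ g - y ⬝ᵥ P *ᵥ y / 2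

lemma lintegral_exp_resample_stdGaussian (hP : IsStarProjection P) (y g : ι → ℝ) :
    ∫⁻ g', ENNReal.ofReal (Real.exp (y ⬝ᵥ resample P g g' - y ⬝ᵥ y / 2)) ∂(stdGaussian ι) =
      ENNReal.ofReal (Real.exp (logLikelihoodRatio P y g)) := by
  have split (g' : ι → ℝ) :
      ENNReal.ofReal (Real.exp (y ⬝ᵥ resample P g g' - y ⬝ᵥ y / 2)) =
        ENNReal.ofReal (Real.exp ((P *ᵥ y) ⬝ᵥ g - y ⬝ᵥ y / 2)) *
          ENNReal.ofReal (Real.exp (((1 - P) *ᵥ y) ⬝ᵥ g')) := by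
    rw [← ENNReal.ofReal_mul (Real.exp_pos _).le, ← Real.exp_add, resample, dotProduct_add,
      dotProduct_mulVec_comm_of_isStarProjection hP,
      dotProduct_mulVec_comm_of_isStarProjection hP.one_sub, add_sub_right_comm]
  simp_rw [split]
  rw [lintegral_const_mul _ (by unfold dotProduct; fun_prop), lintegral_exp_dotProduct_stdGaussian,
    ← ENNReal.ofReal_mul (Real.exp_pos _).le, ← Real.exp_add,
    ← dotProduct_mulVec_self_of_isStarProjection hP.one_sub, sub_mulVec, one_mulVec,
    dotProduct_sub, logLikelihoodRatio]
  congr 2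
  ring

lemma logLikelihoodRatio_two_smul (P : Matrix ι ι ℝ) (y g : ι → ℝ) :
    logLikelihoodRatio P ((2 : ℝ) • y) g = 2 * logLikelihoodRatio P y g - y ⬝ᵥ P *ᵥ y := by
  simp only [logLikelihoodRatio, mulVec_smul, smul_dotProduct, dotProduct_smul, smul_eq_mul]
  ring

/-- The square of the likelihood ratio is, up to the factor `exp |P y|²`, the likelihood ratio of
the shift by `2 y`, which has mean one. -/
lemma exp_logLikelihoodRatio_le {y : ι → ℝ} {B : ℝ} (hB : y ⬝ᵥ P *ᵥ y ≤ B) (g : ι → ℝ) (D : ℝ) :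
    Real.exp (logLikelihoodRatio P y g) ≤
      Real.exp (-D) * Real.exp (logLikelihoodRatio P ((2 : ℝ) • y) g) + Real.exp (B + D) := by
  rw [← Real.exp_add, logLikelihoodRatio_two_smul]
  rcases le_total (logLikelihoodRatio P y g) (B + D) with h | h
  · exact le_add_of_nonneg_of_le (Real.exp_pos _).le (Real.exp_le_exp.2 h)
  · refine le_add_of_le_of_nonneg (Real.exp_le_exp.2 ?_) (Real.exp_pos _).le
    linarith

end Resampling

/-- An adaptive measurement procedure with histories in `H`: in round `m` the rows of
`query m h`, where `h` is the current history, are measured on the hidden vector, and `update m h`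
turns the answers into the new history. -/
structure AdaptiveSystem (H ι ρ : Type*) [MeasurableSpace H] where
  query : ℕ → H → Matrix ρ ι ℝ
  update : ℕ → H → (ρ → ℝ) → H
  init : H
  measurable_query : ∀ m, Measurable (query m)
  measurable_update : ∀ m, Measurable fun p : H × (ρ → ℝ) => update m p.1 p.2

namespace AdaptiveSystem

variable {H ι ρ : Type*} [MeasurableSpace H] [Fintype ι] [Fintype ρ] (S : AdaptiveSystem H ι ρ)

/-- One round on the hidden vector `g`, acting on pairs of a history and of the orthogonal
projection onto the span of the queries made so far. -/
def next (m : ℕ) (z : H × Matrix ι ι ℝ) (g : ι → ℝ) : H × Matrix ι ι ℝ :=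
  (S.update m z.1 (S.query m z.1 *ᵥ g), extendByRows z.2 (S.query m z.1))

/-- The history after `m` rounds on the hidden vector `g`, together with the orthogonal projection
onto the span of the queries made. -/
def state : ℕ → (ι → ℝ) → H × Matrix ι ι ℝ
  | 0, _ => (S.init, 0)
  | m + 1, g => S.next m (state m g) g

lemma isStarProjection_state (m : ℕ) (g : ι → ℝ) : IsStarProjection (S.state m g).2 := by
  induction m with
  | zero => exact .zero _
  | succ m ih => exact isStarProjection_extendProjection ih _

lemma trace_state_le (m : ℕ) (g : ι → ℝ) : (S.state m g).2.trace ≤ m * Fintype.card ρ := by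
  induction m with
  | zero => simp [state]
  | succ m ih =>
    refine (trace_extendByRows_le _ _).trans ?_
    push_cast
    linarith

lemma measurable_extendByRows_query (m : ℕ) :
    Measurable fun z : H × Matrix ι ι ℝ => extendByRows z.2 (S.query m z.1) :=
  measurable_extendProjection measurable_snd ((S.measurable_query m).comp measurable_fst) _

lemma measurable_next (m : ℕ) :
    Measurable fun p : (H × Matrix ι ι ℝ) × (ι → ℝ) => S.next m p.1 p.2 := by
  have hquery : Measurable fun p : (H × Matrix ι ι ℝ) × (ι → ℝ) => S.query m p.1.1 :=
    (S.measurable_query m).comp (measurable_fst.comp measurable_fst)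
  exact .prodMk ((S.measurable_update m).comp
    ((measurable_fst.comp measurable_fst).prodMk (measurable_mulVec hquery measurable_snd)))
    ((S.measurable_extendByRows_query m).comp measurable_fst)

lemma measurable_state (m : ℕ) : Measurable (S.state m) := by
  induction m with
  | zero => exact measurable_const
  | succ m ih => exact (S.measurable_next m).comp (ih.prodMk measurable_id)

lemma next_resample {m : ℕ} {z : H × Matrix ι ι ℝ} (hz : IsStarProjection z.2) (g g' : ι → ℝ) :
    S.next m z (resample (extendByRows z.2 (S.query m z.1)) g g') = S.next m z g := by
  rw [next, mulVec_resample (self_mul_extendByRows hz _), next]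

/-- Given the state, the part of the Gaussian vector invisible to the queries made so far is still
Gaussian, so it may be resampled. -/
lemma lintegral_state_eq_lintegral_resample (m : ℕ) {Ψ : (H × Matrix ι ι ℝ) × (ι → ℝ) → ℝ≥0∞}
    (hΨ : Measurable Ψ) :
    ∫⁻ g, Ψ (S.state m g, g) ∂(stdGaussian ι) =
      ∫⁻ g, ∫⁻ g', Ψ (S.state m g, resample (S.state m g).2 g g')
        ∂(stdGaussian ι) ∂(stdGaussian ι) := by
  induction m generalizing Ψ with
  | zero => simp [state, resample]
  | succ m ih =>
    have hΨnext : Measurable fun p : (H × Matrix ι ι ℝ) × (ι → ℝ) => Ψ (S.next m p.1 p.2, p.2) :=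
      hΨ.comp ((S.measurable_next m).prodMk measurable_snd)
    have hΨresample : Measurable fun p : ((H × Matrix ι ι ℝ) × (ι → ℝ)) × (ι → ℝ) =>
        Ψ (S.next m p.1.1 p.1.2, resample (S.next m p.1.1 p.1.2).2 p.1.2 p.2) := by
      have hnext : Measurable fun p : ((H × Matrix ι ι ℝ) × (ι → ℝ)) × (ι → ℝ) =>
          S.next m p.1.1 p.1.2 := (S.measurable_next m).comp measurable_fst
      exact hΨ.comp (hnext.prodMk (measurable_resample (measurable_snd.comp hnext)
        (measurable_snd.comp measurable_fst) measurable_snd))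
    refine (ih hΨnext).trans
      (Eq.trans ?_ (ih (hΨresample.lintegral_prod_right' (ν := stdGaussian ι))).symm)
    refine lintegral_congr fun g => ?_
    set z := S.state m g
    have hP : IsStarProjection z.2 := S.isStarProjection_state m g
    have hP' : IsStarProjection (extendByRows z.2 (S.query m z.1)) :=
      isStarProjection_extendProjection hP _
    have hΨz : Measurable fun g' => Ψ (S.next m z (resample z.2 g g'), resample z.2 g g') :=
      hΨnext.comp (measurable_const.prodMk
        (measurable_resample measurable_const measurable_const measurable_id))
    rw [← lintegral_resample_stdGaussian hP' hΨz]
    refine lintegral_congr fun g' => lintegral_congr fun g'' => ?_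
    rw [extendByRows, resample_resample (mul_extendProjection hP _) (extendProjection_mul hP _)]
    exact congrArg (fun w => Ψ (w, _)) (S.next_resample hP _ _)

lemma lintegral_state_const_add (m : ℕ) (y : ι → ℝ) {F : H × Matrix ι ι ℝ → ℝ≥0∞}
    (hF : Measurable F) :
    ∫⁻ g, F (S.state m (y + g)) ∂(stdGaussian ι) =
      ∫⁻ g, F (S.state m g) * ENNReal.ofReal (Real.exp (logLikelihoodRatio (S.state m g).2 y g))
        ∂(stdGaussian ι) := by
  have hmeas : Measurable fun p : (H × Matrix ι ι ℝ) × (ι → ℝ) =>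
      F p.1 * ENNReal.ofReal (Real.exp (y ⬝ᵥ p.2 - y ⬝ᵥ y / 2)) := by
    have := measurable_dotProduct (α := (H × Matrix ι ι ℝ) × (ι → ℝ)) (measurable_const (a := y))
      measurable_snd
    exact (hF.comp measurable_fst).mul (by fun_prop)
  rw [lintegral_const_add_stdGaussian y (F := fun g => F (S.state m g))
    (hF.comp (S.measurable_state m)), S.lintegral_state_eq_lintegral_resample m hmeas]
  refine lintegral_congr fun g => ?_
  have hdot : Measurable fun g' => y ⬝ᵥ resample (S.state m g).2 g g' :=
    measurable_dotProduct measurable_const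
      (measurable_resample measurable_const measurable_const measurable_id)
  dsimp only
  rw [lintegral_const_mul _ (by fun_prop),
    lintegral_exp_resample_stdGaussian (S.isStarProjection_state m g)]

end AdaptiveSystem

/-! ### Growth of the captured energy -/

lemma sum_measureReal_le_of_forall_card_le {Ω σ : Type*} [MeasurableSpace Ω] [Fintype σ]
    {μ : Measure Ω} [IsProbabilityMeasure μ] {E : σ → Set Ω} (hE : ∀ s, MeasurableSet (E s)) {N : ℝ}
    (hN : ∀ ω, (Fintype.card {s // ω ∈ E s} : ℝ) ≤ N) : ∑ s, μ.real (E s) ≤ N := by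
  have count_eq (ω : Ω) :
      (Fintype.card {s // ω ∈ E s} : ℝ) = ∑ s, (E s).indicator (1 : Ω → ℝ) ω := by
    simp only [Set.indicator_apply, Pi.one_apply, Finset.sum_boole, Fintype.card_subtype]
  have integrable (s : σ) : Integrable ((E s).indicator (1 : Ω → ℝ)) μ :=
    (integrable_const (1 : ℝ)).indicator (hE s)
  calc ∑ s, μ.real (E s) = ∫ ω, ∑ s, (E s).indicator (1 : Ω → ℝ) ω ∂μ := by
        rw [integral_finsetSum _ fun s _ => integrable s]
        simp only [integral_indicator_one (hE _)]
    _ ≤ ∫ _, N ∂μ := integral_mono (integrable_finsetSum _ fun s _ => integrable s)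
        (integrable_const N) fun ω => (count_eq ω).symm.trans_le (hN ω)
    _ = N := by simp only [integral_const, probReal_univ, one_smul]

/-- A finite family of vectors, such that a uniformly random member `x` satisfies
`E exp (θ |P x|²) ≤ exp (γ rank P)` for every orthogonal projection `P`. -/
def SubexponentialEnergy {σ ι : Type*} [Fintype σ] [Fintype ι] (x : σ → ι → ℝ) (θ γ : ℝ) : Prop :=
  ∀ P : Matrix ι ι ℝ, IsStarProjection P →
    ∑ s, Real.exp (θ * (x s ⬝ᵥ P *ᵥ x s)) ≤ Fintype.card σ * Real.exp (γ * P.trace)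

lemma SubexponentialEnergy.card_le {σ ι : Type*} [Fintype σ] [Fintype ι] {x : σ → ι → ℝ} {θ γ : ℝ}
    (hx : SubexponentialEnergy x θ γ) (hθ : 0 ≤ θ) {P : Matrix ι ι ℝ} (hP : IsStarProjection P)
    (B : ℝ) :
    (Fintype.card {s // B < x s ⬝ᵥ P *ᵥ x s} : ℝ) ≤
      Fintype.card σ * Real.exp (γ * P.trace - θ * B) := by
  have markov :
      (Fintype.card {s // B < x s ⬝ᵥ P *ᵥ x s} : ℝ) * Real.exp (θ * B) ≤
        ∑ s, Real.exp (θ * (x s ⬝ᵥ P *ᵥ x s)) := by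
    rw [Fintype.card_subtype, ← nsmul_eq_mul, ← Finset.sum_const, Finset.sum_filter]
    refine Finset.sum_le_sum fun s _ => ?_
    split_ifs with hs
    · gcongr
    · positivity
  rw [Real.exp_sub, mul_div_assoc', le_div_iff₀ (Real.exp_pos _)]
  exact markov.trans (hx P hP)

namespace AdaptiveSystem

variable {H ι ρ : Type*} [MeasurableSpace H] [Fintype ι] [Fintype ρ] (S : AdaptiveSystem H ι ρ)

lemma lintegral_exp_logLikelihoodRatio_state (m : ℕ) (y : ι → ℝ) :
    ∫⁻ g, ENNReal.ofReal (Real.exp (logLikelihoodRatio (S.state m g).2 y g)) ∂(stdGaussian ι) =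
      1 := by
  have h := S.lintegral_state_const_add m y (measurable_const (a := 1))
  simp only [one_mul, lintegral_const, measure_univ] at h
  exact h.symm

lemma measureReal_state_const_add_le_of_energy_le {A : Set (H × Matrix ι ι ℝ)}
    (hA : MeasurableSet A) {x : ι → ℝ} {B : ℝ} (hAB : ∀ z ∈ A, x ⬝ᵥ z.2 *ᵥ x ≤ B) (m : ℕ) (D : ℝ) :
    (stdGaussian ι).real {g | S.state m (x + g) ∈ A} ≤
      Real.exp (-D) + Real.exp (B + D) * (stdGaussian ι).real {g | S.state m g ∈ A} := by
  have pointwise (g : ι → ℝ) :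
      A.indicator 1 (S.state m g) *
          ENNReal.ofReal (Real.exp (logLikelihoodRatio (S.state m g).2 x g)) ≤
        ENNReal.ofReal (Real.exp (-D)) *
            ENNReal.ofReal (Real.exp (logLikelihoodRatio (S.state m g).2 ((2 : ℝ) • x) g)) +
          ENNReal.ofReal (Real.exp (B + D)) * A.indicator 1 (S.state m g) := by
    by_cases hg : S.state m g ∈ A
    · rw [Set.indicator_of_mem hg, Pi.one_apply, one_mul, mul_one,
        ← ENNReal.ofReal_mul (Real.exp_pos _).le,
        ← ENNReal.ofReal_add (by positivity) (Real.exp_pos _).le]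
      exact ENNReal.ofReal_le_ofReal (exp_logLikelihoodRatio_le (hAB _ hg) g D)
    · simp only [Set.indicator_of_notMem hg, zero_mul, zero_le]
  have hind : Measurable (A.indicator (1 : H × Matrix ι ι ℝ → ℝ≥0∞)) := measurable_one.indicator hA
  have shifted_eq : ∫⁻ g, A.indicator 1 (S.state m (x + g)) ∂(stdGaussian ι) =
      stdGaussian ι {g | S.state m (x + g) ∈ A} :=
    lintegral_indicator_one ((S.measurable_state m).comp (measurable_const_add x) hA)
  have unshifted_eq : ∫⁻ g, A.indicator 1 (S.state m g) ∂(stdGaussian ι) =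
      stdGaussian ι {g | S.state m g ∈ A} := lintegral_indicator_one (S.measurable_state m hA)
  have bound := (S.lintegral_state_const_add m x hind).trans_le (lintegral_mono pointwise)
  rw [lintegral_add_right _ (by exact (hind.comp (S.measurable_state m)).const_mul _),
    lintegral_const_mul' _ _ ENNReal.ofReal_ne_top, lintegral_const_mul' _ _ ENNReal.ofReal_ne_top,
    S.lintegral_exp_logLikelihoodRatio_state, mul_one, shifted_eq, unshifted_eq] at bound
  have real_bound := ENNReal.toReal_mono (by finiteness) bound
  rwa [ENNReal.toReal_add (by finiteness) (by finiteness), ENNReal.toReal_mul,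
    ENNReal.toReal_ofReal (Real.exp_pos _).le, ENNReal.toReal_ofReal (Real.exp_pos _).le]
    at real_bound

lemma measurableSet_lt_energy (B : ℝ) (x : ι → ℝ) :
    MeasurableSet {z : H × Matrix ι ι ℝ | B < x ⬝ᵥ z.2 *ᵥ x} :=
  measurableSet_lt measurable_const
    (measurable_dotProduct measurable_const (measurable_mulVec measurable_snd measurable_const))

lemma measureReal_state_const_add_le {A : Set (H × Matrix ι ι ℝ)} (hA : MeasurableSet A) (m : ℕ)
    (x : ι → ℝ) (B D : ℝ) :
    (stdGaussian ι).real {g | S.state m (x + g) ∈ A} ≤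
      (stdGaussian ι).real {g | B < x ⬝ᵥ (S.state m (x + g)).2 *ᵥ x} + Real.exp (-D) +
        Real.exp (B + D) * (stdGaussian ι).real {g | S.state m g ∈ A} := by
  set Z := {z : H × Matrix ι ι ℝ | B < x ⬝ᵥ z.2 *ᵥ x}
  have low_energy := S.measureReal_state_const_add_le_of_energy_le
    (hA.diff (measurableSet_lt_energy B x)) (fun z hz => not_lt.1 hz.2) m D
  calc (stdGaussian ι).real {g | S.state m (x + g) ∈ A}
      ≤ (stdGaussian ι).real ({g | S.state m (x + g) ∈ Z} ∪ {g | S.state m (x + g) ∈ A \ Z}) :=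
        measureReal_mono fun g hg => or_iff_not_imp_left.2 fun hZ => ⟨hg, hZ⟩
    _ ≤ (stdGaussian ι).real {g | S.state m (x + g) ∈ Z} +
          (Real.exp (-D) + Real.exp (B + D) * (stdGaussian ι).real {g | S.state m g ∈ A \ Z}) :=
        (measureReal_union_le _ _).trans (add_le_add_right low_energy _)
    _ ≤ _ := by
        rw [← add_assoc]
        gcongr ?_ + _ + _ * ?_
        · exact le_rfl
        · exact measureReal_mono fun g hg => hg.1

section Leakage

variable {σ : Type*} [Fintype σ] (x : σ → ι → ℝ)

/-- The expected number of shifts `x s` in the family of which the queries of the first `m` rounds,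
on a Gaussian vector shifted by `x s`, capture an energy greater than `B`. -/
def leakage (m : ℕ) (B : ℝ) : ℝ :=
  ∑ s, (stdGaussian ι).real {g | B < x s ⬝ᵥ (S.state m (x s + g)).2 *ᵥ x s}

variable {x}

lemma sum_measureReal_energy_le {θ γ : ℝ} (hx : SubexponentialEnergy x θ γ) (hθ : 0 ≤ θ)
    (hγ : 0 ≤ γ) (m : ℕ) (B : ℝ) :
    ∑ s, (stdGaussian ι).real {g | B < x s ⬝ᵥ (S.state m g).2 *ᵥ x s} ≤
      Fintype.card σ * Real.exp (γ * (m * Fintype.card ρ) - θ * B) := by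
  refine sum_measureReal_le_of_forall_card_le
    (fun s => S.measurable_state m (measurableSet_lt_energy B (x s))) fun g => ?_
  refine (hx.card_le hθ (S.isStarProjection_state m g) B).trans ?_
  gcongr
  exact S.trace_state_le m g

lemma leakage_zero {B : ℝ} (hB : 0 ≤ B) : S.leakage x 0 B = 0 := by
  simp [leakage, state, hB.not_gt]

/-- The queries of a round are determined by the state before it, so the energy captured under a
shift is compared with the energy captured without it at the cost of one round less. -/
lemma leakage_succ_le {θ γ : ℝ} (hx : SubexponentialEnergy x θ γ) (hθ : 0 ≤ θ) (hγ : 0 ≤ γ) (m : ℕ)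
    (B B' D : ℝ) :
    S.leakage x (m + 1) B' ≤ S.leakage x m B + Fintype.card σ * Real.exp (-D) +
      Fintype.card σ * Real.exp (B + D + (γ * ((m + 1 : ℕ) * Fintype.card ρ) - θ * B')) := by
  have hA (s : σ) : MeasurableSet {z : H × Matrix ι ι ℝ |
      B' < x s ⬝ᵥ extendByRows z.2 (S.query m z.1) *ᵥ x s} :=
    measurableSet_lt measurable_const (measurable_dotProduct measurable_const
      (measurable_mulVec (S.measurable_extendByRows_query m) measurable_const))
  have one_round := Finset.sum_le_sum fun s (_ : s ∈ Finset.univ) =>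
    S.measureReal_state_const_add_le (hA s) m (x s) B D
  rw [Finset.sum_add_distrib, Finset.sum_add_distrib, Finset.sum_const, ← Finset.mul_sum,
    nsmul_eq_mul, Finset.card_univ] at one_round
  refine one_round.trans (add_le_add_right ?_ _)
  rw [Real.exp_add (B + D), mul_left_comm]
  gcongr
  exact S.sum_measureReal_energy_le hx hθ hγ (m + 1) B'

lemma leakage_le {θ γ R D : ℝ} (hx : SubexponentialEnergy x θ γ) (hγ : 0 ≤ γ) (hR : 1 ≤ R)
    (hθR : θ * R = 2) {t : ℕ} (hD : γ * (t * Fintype.card ρ) ≤ D) {m : ℕ} (hm : m ≤ t) :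
    S.leakage x m (3 * D * R ^ m) ≤ 2 * m * Fintype.card σ * Real.exp (-D) := by
  have hθ : 0 ≤ θ := le_of_not_gt fun h => by nlinarith
  have hD0 : 0 ≤ D := le_trans (by positivity) hD
  induction m with
  | zero =>
    rw [S.leakage_zero (by positivity), Nat.cast_zero, mul_zero, zero_mul, zero_mul]
  | succ m ih =>
    have step := S.leakage_succ_le hx hθ hγ m (3 * D * R ^ m) (3 * D * R ^ (m + 1)) D
    have exponent_le : 3 * D * R ^ m + D +
        (γ * ((m + 1 : ℕ) * Fintype.card ρ) - θ * (3 * D * R ^ (m + 1))) ≤ -D := by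
      have hγm : γ * ((m + 1 : ℕ) * Fintype.card ρ) ≤ D := le_trans (by gcongr) hD
      have hθ_eq : θ * (3 * D * R ^ (m + 1)) = 6 * D * R ^ m := by
        rw [pow_succ]; linear_combination 3 * D * R ^ m * hθR
      have hRm : D ≤ D * R ^ m := le_mul_of_one_le_right hD0 (one_le_pow₀ hR)
      linarith
    have last_le := mul_le_mul_of_nonneg_left (Real.exp_le_exp.2 exponent_le)
      (Nat.cast_nonneg (α := ℝ) (Fintype.card σ))
    push_cast at step last_le ⊢
    linarith [ih (Nat.le_of_succ_le hm)]

theorem sum_measureReal_history_le {θ γ R D N : ℝ} (hx : SubexponentialEnergy x θ γ) (hγ : 0 ≤ γ)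
    (hR : 1 ≤ R) (hθR : θ * R = 2) {t : ℕ} (hD : γ * (t * Fintype.card ρ) ≤ D) {E : σ → Set H}
    (hE : ∀ s, MeasurableSet (E s)) (hN : ∀ h, (Fintype.card {s // h ∈ E s} : ℝ) ≤ N) :
    ∑ s, (stdGaussian ι).real {g | (S.state t (x s + g)).1 ∈ E s} ≤
      (2 * t + 1) * Fintype.card σ * Real.exp (-D) + Real.exp (3 * D * R ^ t + D) * N := by
  have compare := Finset.sum_le_sum fun s (_ : s ∈ Finset.univ) =>
    S.measureReal_state_const_add_le (measurable_fst (hE s)) t (x s) (3 * D * R ^ t) D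
  rw [Finset.sum_add_distrib, Finset.sum_add_distrib, Finset.sum_const, ← Finset.mul_sum,
    nsmul_eq_mul, Finset.card_univ] at compare
  have unshifted : ∑ s, (stdGaussian ι).real {g | (S.state t g).1 ∈ E s} ≤ N :=
    sum_measureReal_le_of_forall_card_le
      (fun s => S.measurable_state t (measurable_fst (hE s))) fun g => hN _
  calc _ ≤ _ := compare
    _ ≤ 2 * t * Fintype.card σ * Real.exp (-D) + Fintype.card σ * Real.exp (-D) +
          Real.exp (3 * D * R ^ t + D) * N := by
        gcongr
        · exact S.leakage_le hx hγ hR hθR hD le_rfl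
        · exact unshifted
    _ = _ := by ring

end Leakage

end AdaptiveSystem

/-! ### Spectral norm and singular values -/

section SpectralNorm

open scoped Matrix.Norms.L2Operator RealInnerProductSpace

section Nets

variable {E F : Type*} [NormedAddCommGroup E] [NormedAddCommGroup F]

/-- The half of a maximal `1`-separated subset of the ball of radius `2`. -/
lemma exists_finset_half_net (E : Type*) [NormedAddCommGroup E] [NormedSpace ℝ E]
    [FiniteDimensional ℝ E] :
    ∃ N : Finset E, N.card ≤ 5 ^ Module.finrank ℝ E ∧ (∀ z ∈ N, ‖z‖ ≤ 1) ∧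
      ∀ x : E, ‖x‖ ≤ 1 → ∃ z ∈ N, ‖x - z‖ ≤ 1 / 2 := by
  obtain ⟨s, hcard, hs2, hsep⟩ : Besicovitch.multiplicity E ∈ {N | ∃ s : Finset E, s.card = N ∧
      (∀ c ∈ s, ‖c‖ ≤ 2) ∧ ∀ c ∈ s, ∀ d ∈ s, c ≠ d → 1 ≤ ‖c - d‖} :=
    Nat.sSup_mem ⟨0, ∅, by simp⟩ ⟨5 ^ Module.finrank ℝ E, by
      rintro _ ⟨s, rfl, hs2, hsep⟩
      exact Besicovitch.card_le_of_separated s hs2 hsep⟩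
  refine ⟨s.image ((1 / 2 : ℝ) • ·), Finset.card_image_le.trans (hcard ▸
    Besicovitch.multiplicity_le), Finset.forall_mem_image.2 fun c hc => ?_, fun x hx => ?_⟩
  · rw [norm_smul, Real.norm_of_nonneg (by norm_num)]
    linarith [hs2 c hc]
  obtain ⟨c, hc, hlt⟩ : ∃ c ∈ s, ‖(2 : ℝ) • x - c‖ < 1 := by
    by_contra! hfar
    have hx2 : ‖(2 : ℝ) • x‖ ≤ 2 := by rw [norm_smul, Real.norm_two]; linarith
    have hmem : (2 : ℝ) • x ∉ s := fun h => absurd (hfar _ h) (by simp)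
    have hle := Besicovitch.card_le_multiplicity (s := insert ((2 : ℝ) • x) s)
      (Finset.forall_mem_insert _ _ _ |>.2 ⟨hx2, hs2⟩) (by
        simp only [Finset.forall_mem_insert]
        exact ⟨⟨fun h => (h rfl).elim, fun d hd _ => hfar d hd⟩,
          fun c hc => ⟨fun _ => norm_sub_rev c _ ▸ hfar c hc, hsep c hc⟩⟩)
    rw [Finset.card_insert_of_notMem hmem, hcard] at hle
    exact absurd hle (Nat.not_succ_le_self _)
  refine ⟨_, Finset.mem_image_of_mem _ hc, ?_⟩
  have rescale : x - (1 / 2 : ℝ) • c = (1 / 2 : ℝ) • ((2 : ℝ) • x - c) := by module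
  rw [rescale, norm_smul, Real.norm_of_nonneg (by norm_num)]
  linarith

lemma norm_le_two_mul_of_half_net [InnerProductSpace ℝ E] {N : Finset E}
    (hN : ∀ x : E, ‖x‖ ≤ 1 → ∃ z ∈ N, ‖x - z‖ ≤ 1 / 2) {w : E} {C : ℝ}
    (hw : ∀ z ∈ N, ⟪z, w⟫ ≤ C) : ‖w‖ ≤ 2 * C := by
  have hunit : ‖‖w‖⁻¹ • w‖ ≤ 1 := by
    rw [norm_smul, norm_inv, norm_norm]; exact inv_mul_le_one
  obtain ⟨z, hz, hdist⟩ := hN _ hunit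
  have hself : ⟪‖w‖⁻¹ • w, w⟫ = ‖w‖ := by
    rcases eq_or_ne w 0 with rfl | h
    · simp
    · rw [real_inner_smul_left, real_inner_self_eq_norm_mul_norm,
        inv_mul_cancel_left₀ (norm_ne_zero_iff.2 h)]
  have hrest : ⟪‖w‖⁻¹ • w - z, w⟫ ≤ 1 / 2 * ‖w‖ := (real_inner_le_norm _ _).trans (by gcongr)
  rw [inner_sub_left, hself] at hrest
  linarith [hw z hz]

lemma opNorm_le_two_mul_of_half_net [NormedSpace ℝ E] [NormedSpace ℝ F] {N : Finset E}
    (hN : ∀ x : E, ‖x‖ ≤ 1 → ∃ z ∈ N, ‖x - z‖ ≤ 1 / 2) (f : E →L[ℝ] F) {C : ℝ}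
    (hf : ∀ z ∈ N, ‖f z‖ ≤ C) : ‖f‖ ≤ 2 * C := by
  obtain ⟨z₀, hz₀, -⟩ := hN 0 (by simp)
  have hC : 0 ≤ C := (norm_nonneg _).trans (hf z₀ hz₀)
  have hle : ‖f‖ ≤ C + ‖f‖ * (1 / 2) := by
    refine f.opNorm_le_of_unit_norm (by positivity) fun x hx => ?_
    obtain ⟨z, hz, hdist⟩ := hN x hx.le
    calc ‖f x‖ = ‖f z + f (x - z)‖ := by rw [← map_add, add_sub_cancel]
      _ ≤ ‖f z‖ + ‖f (x - z)‖ := norm_add_le _ _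
      _ ≤ C + ‖f‖ * (1 / 2) := add_le_add (hf z hz) (f.le_opNorm_of_le hdist)
  linarith

end Nets

variable {ι κ : Type*} [Fintype ι] [Fintype κ]

lemma norm_toLp_two (x : ι → ℝ) : ‖WithLp.toLp 2 x‖ = √(x ⬝ᵥ x) := by
  simp only [EuclideanSpace.norm_eq, Real.norm_eq_abs, dotProduct, ← sq, sq_abs]

lemma dotProduct_self_le_one {x : EuclideanSpace ℝ ι} (hx : ‖x‖ ≤ 1) : x.ofLp ⬝ᵥ x.ofLp ≤ 1 :=
  Real.sqrt_le_one.1 ((norm_toLp_two x.ofLp).symm.trans_le hx)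

lemma sqrt_sqNorm_eq_norm (x : ι → ℝ) : √(sqNorm x) = ‖WithLp.toLp 2 x‖ := by
  simp only [EuclideanSpace.norm_eq, Real.norm_eq_abs, sqNorm, sq_abs]

lemma inner_toLp_two (x y : ι → ℝ) : ⟪WithLp.toLp 2 x, WithLp.toLp 2 y⟫ = x ⬝ᵥ y := by
  rw [EuclideanSpace.inner_toLp_toLp, star_trivial, dotProduct_comm]

variable [DecidableEq κ]

lemma specNorm_eq_norm (A : Matrix ι κ ℝ) : specNorm A = ‖A‖ := by
  have image_closedBall : WithLp.ofLp '' Metric.closedBall (0 : EuclideanSpace ℝ κ) 1 =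
      {x : κ → ℝ | sqNorm x ≤ 1} := by
    ext x
    rw [Set.mem_ofPred_eq, ← Real.sqrt_le_one, sqrt_sqNorm_eq_norm, ← mem_closedBall_zero_iff]
    exact ⟨by rintro ⟨y, hy, rfl⟩; exact hy, fun hx => ⟨_, hx, rfl⟩⟩
  rw [l2_opNorm_def, ← ContinuousLinearMap.sSup_unitClosedBall_eq_norm, specNorm,
    ← image_closedBall, Set.image_image]
  simp only [sqrt_sqNorm_eq_norm]
  rfl

lemma abs_dotProduct_mulVec_le_norm (A : Matrix ι κ ℝ) (x : ι → ℝ) (y : κ → ℝ) :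
    |x ⬝ᵥ A *ᵥ y| ≤ ‖A‖ * (√(x ⬝ᵥ x) * √(y ⬝ᵥ y)) := by
  rw [← inner_toLp_two, ← norm_toLp_two, ← norm_toLp_two]
  calc _ ≤ ‖WithLp.toLp 2 x‖ * ‖WithLp.toLp 2 (A *ᵥ y)‖ := abs_real_inner_le_norm _ _
    _ ≤ ‖WithLp.toLp 2 x‖ * (‖A‖ * ‖WithLp.toLp 2 y‖) := by
        gcongr
        exact l2_opNorm_mulVec A (WithLp.toLp 2 y)
    _ = _ := by ring

lemma norm_le_four_mul_of_half_net {N : Finset (EuclideanSpace ℝ ι)}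
    {N' : Finset (EuclideanSpace ℝ κ)} (hN : ∀ x, ‖x‖ ≤ 1 → ∃ z ∈ N, ‖x - z‖ ≤ 1 / 2)
    (hN' : ∀ x, ‖x‖ ≤ 1 → ∃ z ∈ N', ‖x - z‖ ≤ 1 / 2) {A : Matrix ι κ ℝ} {C : ℝ}
    (hA : ∀ y ∈ N, ∀ z ∈ N', y.ofLp ⬝ᵥ A *ᵥ z.ofLp ≤ C) : ‖A‖ ≤ 4 * C := by
  have hop : ‖A‖ ≤ 2 * (2 * C) := by
    rw [l2_opNorm_def]
    refine opNorm_le_two_mul_of_half_net hN' _ fun z hz =>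
      norm_le_two_mul_of_half_net hN fun y hy => ?_
    exact (inner_toLp_two y.ofLp (A *ᵥ z.ofLp)).trans_le (hA y hy z hz)
  linarith

lemma singVal_succ_le (A : Matrix ι κ ℝ) {X : Matrix ι κ ℝ} {r : ℕ} (hX : X.rank ≤ r) :
    singVal A (r + 1) ≤ ‖A - X‖ := by
  refine csInf_le ⟨0, ?_⟩ ⟨X, by simpa using hX, (specNorm_eq_norm _).symm⟩
  rintro _ ⟨Y, -, rfl⟩
  rw [specNorm_eq_norm]
  exact norm_nonneg _

lemma norm_sub_le_of_specNorm_le_mul_singVal {A E B : Matrix ι κ ℝ} {r : ℕ} (hA : A.rank ≤ r)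
    {c : ℝ} (hc : 0 ≤ c) (hB : specNorm (A + E - B) ≤ c * singVal (A + E) (r + 1)) :
    ‖A - B‖ ≤ (c + 1) * ‖E‖ := by
  have hsing : singVal (A + E) (r + 1) ≤ ‖E‖ := by simpa using singVal_succ_le (A + E) hA
  calc ‖A - B‖ = ‖(A + E - B) - E‖ := by abel_nf
    _ ≤ ‖A + E - B‖ + ‖E‖ := norm_sub_le _ _
    _ ≤ c * ‖E‖ + ‖E‖ := by
        rw [← specNorm_eq_norm]
        gcongr
        exact hB.trans (by gcongr)
    _ = (c + 1) * ‖E‖ := by ring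

end SpectralNorm

section GaussianMatrices

open scoped Matrix.Norms.L2Operator

variable {ι κ : Type*} [Fintype ι] [Fintype κ]

lemma measure_le_dotProduct_stdGaussian_le {y : ι → ℝ} (hy : y ⬝ᵥ y ≤ 1) {a : ℝ} (ha : 0 ≤ a) :
    stdGaussian ι {g | a ≤ y ⬝ᵥ g} ≤ ENNReal.ofReal (Real.exp (-(a ^ 2 / 2))) := by
  have exponential_moment : ∫⁻ g, ENNReal.ofReal (Real.exp ((a • y) ⬝ᵥ g)) ∂stdGaussian ι ≤
      ENNReal.ofReal (Real.exp (a ^ 2 / 2)) := by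
    rw [lintegral_exp_dotProduct_stdGaussian, smul_dotProduct, dotProduct_smul, smul_smul,
      smul_eq_mul, ← sq]
    gcongr
    exact mul_le_of_le_one_right (sq_nonneg a) hy
  have exp_mono {g : ι → ℝ} (hg : a ≤ y ⬝ᵥ g) : a ^ 2 ≤ (a • y) ⬝ᵥ g := by
    rw [smul_dotProduct, smul_eq_mul, sq]
    gcongr
  calc stdGaussian ι {g | a ≤ y ⬝ᵥ g}
      ≤ stdGaussian ι {g | ENNReal.ofReal (Real.exp (a ^ 2)) ≤
          ENNReal.ofReal (Real.exp ((a • y) ⬝ᵥ g))} :=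
        measure_mono fun g hg => ENNReal.ofReal_le_ofReal (Real.exp_le_exp.2 (exp_mono hg))
    _ ≤ (∫⁻ g, ENNReal.ofReal (Real.exp ((a • y) ⬝ᵥ g)) ∂stdGaussian ι) /
          ENNReal.ofReal (Real.exp (a ^ 2)) :=
        meas_ge_le_lintegral_div (by fun_prop)
          (ENNReal.ofReal_pos.2 (Real.exp_pos _)).ne' ENNReal.ofReal_ne_top
    _ ≤ ENNReal.ofReal (Real.exp (a ^ 2 / 2)) / ENNReal.ofReal (Real.exp (a ^ 2)) := by gcongr
    _ = ENNReal.ofReal (Real.exp (-(a ^ 2 / 2))) := by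
        rw [← ENNReal.ofReal_div_of_pos (Real.exp_pos _), ← Real.exp_sub]
        ring_nf

lemma dotProduct_of_curry_mulVec (g : ι × κ → ℝ) (x : ι → ℝ) (y : κ → ℝ) :
    x ⬝ᵥ of (Function.curry g) *ᵥ y = tensorVec x y ⬝ᵥ g := by
  simp only [dotProduct, mulVec, of_apply, Function.curry_apply, tensorVec, Fintype.sum_prod_type,
    Finset.mul_sum]
  exact Finset.sum_congr rfl fun i _ => Finset.sum_congr rfl fun j _ => by ring

variable [DecidableEq κ]

lemma stdGaussian_norm_gt_le {a : ℝ} (ha : 0 ≤ a) :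
    stdGaussian (ι × κ) {g | 4 * a < ‖of (Function.curry g)‖} ≤
      ENNReal.ofReal (5 ^ (Fintype.card ι + Fintype.card κ) * Real.exp (-(a ^ 2 / 2))) := by
  obtain ⟨N, hNcard, hN1, hN⟩ := exists_finset_half_net (EuclideanSpace ℝ ι)
  obtain ⟨N', hNcard', hN1', hN'⟩ := exists_finset_half_net (EuclideanSpace ℝ κ)
  rw [finrank_euclideanSpace] at hNcard hNcard'
  have subset_union : {g : ι × κ → ℝ | 4 * a < ‖of (Function.curry g)‖} ⊆
      ⋃ p ∈ N ×ˢ N', {g | a ≤ tensorVec p.1.ofLp p.2.ofLp ⬝ᵥ g} := by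
    intro g hg
    by_contra! hnot
    simp only [Set.mem_iUnion, Finset.mem_product, Set.mem_ofPred_eq, not_exists, not_le,
      Prod.forall] at hnot
    refine not_lt_of_ge (norm_le_four_mul_of_half_net hN hN' fun y hy z hz => ?_) hg
    rw [dotProduct_of_curry_mulVec]
    exact (hnot y z ⟨hy, hz⟩).le
  calc _ ≤ ∑ p ∈ N ×ˢ N', stdGaussian (ι × κ) {g | a ≤ tensorVec p.1.ofLp p.2.ofLp ⬝ᵥ g} :=
        (measure_mono subset_union).trans (measure_biUnion_finset_le _ _)
    _ ≤ ∑ _p ∈ N ×ˢ N', ENNReal.ofReal (Real.exp (-(a ^ 2 / 2))) := by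
        refine Finset.sum_le_sum fun p hp => measure_le_dotProduct_stdGaussian_le ?_ ha
        obtain ⟨hy, hz⟩ := Finset.mem_product.1 hp
        rw [tensorVec_dotProduct_tensorVec]
        exact mul_le_one₀ (dotProduct_self_le_one (hN1 _ hy)) (dotProduct_star_self_nonneg _)
          (dotProduct_self_le_one (hN1' _ hz))
    _ = ENNReal.ofReal (N.card * N'.card * Real.exp (-(a ^ 2 / 2))) := by
        rw [Finset.sum_const, nsmul_eq_mul, Finset.card_product, ENNReal.ofReal_mul (by positivity),
          ← Nat.cast_mul, ENNReal.ofReal_natCast]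
    _ ≤ _ := by
        rw [pow_add]
        gcongr <;> exact_mod_cast ‹_›

end GaussianMatrices

/-! ### Planted matrices -/

section Plants

open scoped Matrix.Norms.L2Operator

variable {ι : Type*}

/-- The symmetric matrix `G + Gᵀ`, where `G` is the square matrix with entries `g`. -/
def symmetrization (g : ι × ι → ℝ) : Matrix ι ι ℝ :=
  of (Function.curry g) + (of (Function.curry g))ᵀ

lemma symmetrization_isSymm (g : ι × ι → ℝ) : (symmetrization g).IsSymm := by
  rw [IsSymm, symmetrization, transpose_add, transpose_transpose, add_comm]

lemma symmetrization_add (g h : ι × ι → ℝ) :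
    symmetrization (g + h) = symmetrization g + symmetrization h := by
  ext i j
  exact add_add_add_comm _ _ _ _

lemma symmetrization_tensorVec (u v : ι → ℝ) :
    symmetrization (tensorVec u v) = vecMulVec u v + vecMulVec v u := by
  ext i j
  exact congrArg (u i * v j + ·) (mul_comm _ _)

variable [Fintype ι]

lemma norm_symmetrization_le [DecidableEq ι] (g : ι × ι → ℝ) :
    ‖symmetrization g‖ ≤ 2 * ‖of (Function.curry g)‖ := by
  refine (norm_add_le _ _).trans_eq ?_
  rw [← conjTranspose_eq_transpose_of_trivial, l2_opNorm_conjTranspose, two_mul]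

lemma rank_symmetrization_tensorVec_le (u v : ι → ℝ) :
    (symmetrization (tensorVec u v)).rank ≤ 2 := by
  have range_le : LinearMap.range ((vecMulVec u v).mulVecLin + (vecMulVec v u).mulVecLin) ≤
      LinearMap.range (vecMulVec u v).mulVecLin ⊔ LinearMap.range (vecMulVec v u).mulVecLin := by
    rintro _ ⟨x, rfl⟩
    exact Submodule.add_mem_sup ⟨x, rfl⟩ ⟨x, rfl⟩
  rw [symmetrization_tensorVec, rank, mulVecLin_add]
  calc _ ≤ _ := Submodule.finrank_mono range_le
    _ ≤ (vecMulVec u v).rank + (vecMulVec v u).rank :=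
        Submodule.finrank_add_le_finrank_add_finrank _ _
    _ ≤ 1 + 1 := add_le_add (rank_vecMulVec_le u v) (rank_vecMulVec_le v u)

lemma dotProduct_symmetrization_tensorVec_mulVec (u v x y : ι → ℝ) :
    x ⬝ᵥ symmetrization (tensorVec u v) *ᵥ y =
      (u ⬝ᵥ x) * (v ⬝ᵥ y) + (v ⬝ᵥ x) * (u ⬝ᵥ y) := by
  rw [symmetrization_tensorVec, add_mulVec, vecMulVec_mulVec, vecMulVec_mulVec, dotProduct_add,
    op_smul_eq_smul, op_smul_eq_smul, dotProduct_smul, dotProduct_smul, dotProduct_comm x,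
    dotProduct_comm x, smul_eq_mul, smul_eq_mul, mul_comm, mul_comm (u ⬝ᵥ y)]

/-- The planted vector `α (u ⊗ v)` for sign vectors `u` and `v`; its symmetrization is the rank two
matrix `α (u vᵀ + v uᵀ)`. -/
def plantVec (α : ℝ) (s : (ι → Bool) × (ι → Bool)) : ι × ι → ℝ :=
  tensorVec (α • signVec s.1) (signVec s.2)

lemma subexponentialEnergy_plantVec {α θ : ℝ} (hθ : 0 ≤ θ)
    (hα : 8 * (θ * α ^ 2 * Fintype.card ι) ≤ 1) :
    SubexponentialEnergy (plantVec (ι := ι) α) θ (4 * (θ * α ^ 2)) := by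
  intro P hP
  have hc : 0 ≤ θ * α ^ 2 := by positivity
  have energy_eq (s : (ι → Bool) × (ι → Bool)) : θ * (plantVec α s ⬝ᵥ P *ᵥ plantVec α s) =
      tensorVec (signVec s.1) (signVec s.2) ⬝ᵥ ((θ * α ^ 2) • P) *ᵥ
        tensorVec (signVec s.1) (signVec s.2) := by
    have plantVec_eq : plantVec α s = α • tensorVec (signVec s.1) (signVec s.2) := by
      ext p
      exact mul_assoc _ _ _
    rw [plantVec_eq, mulVec_smul, smul_dotProduct, dotProduct_smul, smul_mulVec, dotProduct_smul]
    simp only [smul_eq_mul]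
    ring
  have form_le (x : ι × ι → ℝ) :
      x ⬝ᵥ ((θ * α ^ 2) • P) *ᵥ x ≤ θ * α ^ 2 * (x ⬝ᵥ x) := by
    rw [smul_mulVec, dotProduct_smul, smul_eq_mul]
    gcongr
    exact dotProduct_mulVec_le_of_isStarProjection hP x
  have hκ : 4 * (θ * α ^ 2 * Fintype.card ι) ≤ 1 := by
    have : 0 ≤ θ * α ^ 2 * Fintype.card ι := by positivity
    linarith
  have h := sum_exp_quadraticForm_tensorVec_signVec_le
    ((posSemidef_of_isStarProjection hP).smul hc) form_le hα hκ
  rw [trace_smul, smul_eq_mul, ← mul_assoc] at h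
  simpa only [energy_eq, Fintype.card_prod, Fintype.card_fun, Fintype.card_bool, Nat.cast_mul,
    Nat.cast_pow, Nat.cast_ofNat] using h

/-- Chernoff's bound with exponential parameter `c`. -/
lemma card_le_dotProduct_signVec_le {y : ι → ℝ} {b c : ℝ} (hy : y ⬝ᵥ y ≤ b) (hc : 0 ≤ c) :
    ((Finset.univ.filter fun s : ι → Bool => c * b ≤ y ⬝ᵥ signVec s).card : ℝ) ≤
      2 ^ Fintype.card ι * Real.exp (-(c ^ 2 * b / 2)) := by
  have one_le {s : ι → Bool} (hs : c * b ≤ y ⬝ᵥ signVec s) :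
      1 ≤ Real.exp ((c • y) ⬝ᵥ signVec s - c ^ 2 * b) := by
    rw [Real.one_le_exp_iff, smul_dotProduct, smul_eq_mul]
    nlinarith
  calc _ ≤ ∑ s : ι → Bool, Real.exp ((c • y) ⬝ᵥ signVec s - c ^ 2 * b) := by
        rw [Finset.cast_card]
        refine (Finset.sum_le_sum fun s hs => one_le (Finset.mem_filter.1 hs).2).trans ?_
        exact Finset.sum_le_univ_sum_of_nonneg fun s => (Real.exp_pos _).le
    _ = (∑ s : ι → Bool, Real.exp ((c • y) ⬝ᵥ signVec s)) * Real.exp (-(c ^ 2 * b)) := by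
        simp only [sub_eq_add_neg, Real.exp_add, Finset.sum_mul]
    _ ≤ 2 ^ Fintype.card ι * Real.exp (c ^ 2 * b / 2) * Real.exp (-(c ^ 2 * b)) := by
        gcongr
        refine (sum_exp_dotProduct_signVec_le _).trans ?_
        rw [smul_dotProduct, dotProduct_smul, smul_smul, smul_eq_mul, ← sq]
        gcongr
    _ = _ := by
        rw [mul_assoc, ← Real.exp_add]
        ring_nf

lemma card_le_abs_dotProduct_signVec_le {y : ι → ℝ} {b c : ℝ} (hy : y ⬝ᵥ y ≤ b) (hc : 0 ≤ c) :
    ((Finset.univ.filter fun s : ι → Bool => c * b ≤ |y ⬝ᵥ signVec s|).card : ℝ) ≤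
      2 * (2 ^ Fintype.card ι * Real.exp (-(c ^ 2 * b / 2))) := by
  have hneg : -y ⬝ᵥ -y ≤ b := by rwa [neg_dotProduct_neg]
  simp only [le_abs, Finset.filter_or, ← neg_dotProduct, two_mul]
  calc _ ≤ _ := mod_cast Finset.card_union_le _ _
    _ ≤ _ := add_le_add (card_le_dotProduct_signVec_le hy hc)
        (card_le_dotProduct_signVec_le hneg hc)

lemma abs_signVec_dotProduct_signVec_le (u v : ι → Bool) :
    |signVec u ⬝ᵥ signVec v| ≤ Fintype.card ι := by
  have h := abs_real_inner_le_norm (WithLp.toLp 2 (signVec u)) (WithLp.toLp 2 (signVec v))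
  rwa [inner_toLp_two, norm_toLp_two, norm_toLp_two, signVec_dotProduct_self,
    signVec_dotProduct_self, Real.mul_self_sqrt (Nat.cast_nonneg _)] at h

lemma signVec_dotProduct_mul_signVec_dotProduct_lt [Nonempty ι] {u v u' v' : ι → Bool} {c : ℝ}
    (h : |signVec u ⬝ᵥ signVec v| < c) :
    (signVec u ⬝ᵥ signVec v) * (signVec u' ⬝ᵥ signVec v') < c * Fintype.card ι := by
  have : (0 : ℝ) < Fintype.card ι := mod_cast Fintype.card_pos
  calc _ ≤ |signVec u ⬝ᵥ signVec v| * |signVec u' ⬝ᵥ signVec v'| :=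
        (le_abs_self _).trans_eq (abs_mul _ _)
    _ ≤ |signVec u ⬝ᵥ signVec v| * Fintype.card ι := by
        gcongr
        exact abs_signVec_dotProduct_signVec_le u' v'
    _ < _ := by gcongr

/-- Test `P_{s₀} - P_s` on the two sign vectors of `s₀`. -/
lemma exists_correlation_of_norm_sub_le [DecidableEq ι] [Nonempty ι] {α δ : ℝ} (hα : 0 < α)
    (hδ : 4 * δ ≤ α * Fintype.card ι) {s s₀ : (ι → Bool) × (ι → Bool)}
    (h : ‖symmetrization (plantVec α s₀) - symmetrization (plantVec α s)‖ ≤ 2 * δ) :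
    (1 / 4 : ℝ) * Fintype.card ι ≤ |signVec s₀.1 ⬝ᵥ signVec s.1| ∨
      (1 / 4 : ℝ) * Fintype.card ι ≤ |signVec s₀.2 ⬝ᵥ signVec s.1| := by
  by_contra! hfar
  obtain ⟨hfar₁, hfar₂⟩ := hfar
  set n := (Fintype.card ι : ℝ) with hn
  have n_nonneg : 0 ≤ n := Nat.cast_nonneg _
  have form_le : signVec s₀.1 ⬝ᵥ (symmetrization (plantVec α s₀) -
      symmetrization (plantVec α s)) *ᵥ signVec s₀.2 ≤ 2 * δ * n := by
    refine (le_abs_self _).trans ((abs_dotProduct_mulVec_le_norm _ _ _).trans ?_)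
    rw [signVec_dotProduct_self, signVec_dotProduct_self, ← hn, Real.mul_self_sqrt n_nonneg]
    gcongr
  have form_eq : signVec s₀.1 ⬝ᵥ (symmetrization (plantVec α s₀) -
      symmetrization (plantVec α s)) *ᵥ signVec s₀.2 =
      α * (n * n + (signVec s₀.1 ⬝ᵥ signVec s₀.2) ^ 2 -
        ((signVec s₀.1 ⬝ᵥ signVec s.1) * (signVec s₀.2 ⬝ᵥ signVec s.2) +
          (signVec s₀.2 ⬝ᵥ signVec s.1) * (signVec s₀.1 ⬝ᵥ signVec s.2))) := by
    rw [sub_mulVec, dotProduct_sub, plantVec, plantVec,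
      dotProduct_symmetrization_tensorVec_mulVec, dotProduct_symmetrization_tensorVec_mulVec]
    simp only [smul_dotProduct, smul_eq_mul, signVec_dotProduct_self, ← hn,
      dotProduct_comm (signVec s₀.2) (signVec s₀.1), dotProduct_comm (signVec s.1),
      dotProduct_comm (signVec s.2)]
    ring
  have diagonal_lt := signVec_dotProduct_mul_signVec_dotProduct_lt (u' := s₀.2) (v' := s.2) hfar₁
  have cross_lt := signVec_dotProduct_mul_signVec_dotProduct_lt (u' := s₀.1) (v' := s.2) hfar₂
  have form_gt : α * (n * n / 2) < 2 * δ * n := by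
    refine lt_of_lt_of_le ?_ (form_eq.symm.trans_le form_le)
    gcongr
    linarith [sq_nonneg (signVec s₀.1 ⬝ᵥ signVec s₀.2)]
  nlinarith [mul_le_mul_of_nonneg_right hδ n_nonneg]

/-- The sign vectors whose inner product with that of `w` is at least a quarter of its maximal
value. -/
def correlated (w : ι → Bool) : Finset (ι → Bool) :=
  Finset.univ.filter fun u => (1 / 4 : ℝ) * Fintype.card ι ≤ |signVec w ⬝ᵥ signVec u|

lemma card_correlated_le (w : ι → Bool) : ((correlated w).card : ℝ) ≤
    2 * (2 ^ Fintype.card ι * Real.exp (-(Fintype.card ι / 32 : ℝ))) := by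
  have h := card_le_abs_dotProduct_signVec_le (signVec_dotProduct_self w).le
    (c := 1 / 4) (by norm_num)
  rwa [show (1 / 4 : ℝ) ^ 2 * Fintype.card ι / 2 = Fintype.card ι / 32 by ring] at h

lemma plants_near_subset [DecidableEq ι] [Nonempty ι] {α δ : ℝ} (hα : 0 < α)
    (hδ : 4 * δ ≤ α * Fintype.card ι) {B : Matrix ι ι ℝ} {s₀ : (ι → Bool) × (ι → Bool)}
    (hs₀ : ‖symmetrization (plantVec α s₀) - B‖ ≤ δ) :
    (Finset.univ.filter fun s => ‖symmetrization (plantVec α s) - B‖ ≤ δ) ⊆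
      (correlated s₀.1 ∪ correlated s₀.2) ×ˢ Finset.univ := by
  intro s hs
  have hs : ‖symmetrization (plantVec α s) - B‖ ≤ δ := (Finset.mem_filter.1 hs).2
  have hdist := norm_sub_le_norm_sub_add_norm_sub (symmetrization (plantVec α s₀)) B
    (symmetrization (plantVec α s))
  rw [norm_sub_rev B] at hdist
  simpa [correlated] using exists_correlation_of_norm_sub_le hα hδ
    (s := s) (s₀ := s₀) (by linarith)

lemma card_plants_near_le [DecidableEq ι] [Nonempty ι] {α δ : ℝ} (hα : 0 < α)
    (hδ : 4 * δ ≤ α * Fintype.card ι) (B : Matrix ι ι ℝ) :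
    (Fintype.card {s : (ι → Bool) × (ι → Bool) // ‖symmetrization (plantVec α s) - B‖ ≤ δ} : ℝ) ≤
      4 ^ Fintype.card ι * (4 * Real.exp (-(Fintype.card ι / 32 : ℝ))) := by
  by_cases hex : ∃ s₀, ‖symmetrization (plantVec (ι := ι) α s₀) - B‖ ≤ δ
  swap
  · rw [Fintype.card_eq_zero_iff.2 ⟨fun s => hex ⟨s.1, s.2⟩⟩, Nat.cast_zero]
    positivity
  obtain ⟨s₀, hs₀⟩ := hex
  have card_union : ((correlated s₀.1 ∪ correlated s₀.2).card : ℝ) ≤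
      (correlated s₀.1).card + (correlated s₀.2).card := mod_cast Finset.card_union_le _ _
  rw [Fintype.card_subtype]
  calc _ ≤ (((correlated s₀.1 ∪ correlated s₀.2) ×ˢ Finset.univ).card : ℝ) :=
        mod_cast Finset.card_le_card (plants_near_subset hα hδ hs₀)
    _ = ((correlated s₀.1 ∪ correlated s₀.2).card : ℝ) * 2 ^ Fintype.card ι := by
        rw [Finset.card_product, Finset.card_univ, Fintype.card_fun, Fintype.card_bool]
        push_cast
        rfl
    _ ≤ (4 * (2 ^ Fintype.card ι * Real.exp (-(Fintype.card ι / 32 : ℝ)))) *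
          2 ^ Fintype.card ι := by
        gcongr
        linarith [card_correlated_le s₀.1, card_correlated_le s₀.2]
    _ = _ := by
        rw [show (4 : ℝ) ^ Fintype.card ι = 2 ^ Fintype.card ι * 2 ^ Fintype.card ι by
          rw [← mul_pow]; norm_num]
        ring

end Plants

section Reduction

/-- The matrix of the linear map `g ↦ vec (symmetrization g)`. -/
def vecSymmetrization (n : ℕ) : Matrix (Fin (n * n)) (Fin n × Fin n) ℝ :=
  of fun l p => (if finProdFinEquiv.symm l = p then 1 else 0) +
    (if (finProdFinEquiv.symm l).swap = p then 1 else 0)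

lemma vecSymmetrization_mulVec {n : ℕ} (g : Fin n × Fin n → ℝ) :
    vecSymmetrization n *ᵥ g = _root_.vec n (symmetrization g) := by
  ext l
  simp only [mulVec, dotProduct, vecSymmetrization, of_apply, add_mul, ite_mul, one_mul, zero_mul,
    Finset.sum_add_distrib, Finset.sum_ite_eq, Finset.mem_univ, if_true]
  rfl

namespace QueryMaps

variable {N k t : ℕ} {ι : Type*} [Fintype ι]

/-- The adaptive system which measures `M g` with the query maps `Q`. A history holds the responses
of all `t` rounds, with zeros in the rounds not yet played. -/
def toAdaptiveSystem (Q : QueryMaps N k t)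
    (hQ : ∀ (j : Fin t) (i : Fin k) (l : Fin N), Measurable fun h => Q j h i l)
    (M : Matrix (Fin N) ι ℝ) : AdaptiveSystem (Fin t → Fin k → ℝ) ι (Fin k) where
  query m h := if hm : m < t then Q ⟨m, hm⟩ (fun i => h ⟨i.1, i.isLt.trans hm⟩) * M else 0
  update m h a := if hm : m < t then Function.update h ⟨m, hm⟩ a else h
  init := 0
  measurable_query m := by
    by_cases hm : m < t
    · simp only [hm, dif_pos]
      refine measurable_matrix_iff.2 fun i p => ?_
      simp only [mul_apply]
      refine Finset.measurable_sum _ fun l _ => ?_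
      exact ((hQ ⟨m, hm⟩ i l).comp
        (measurable_pi_lambda _ fun _ => measurable_pi_apply _)).mul_const _
    · simp only [hm, dif_neg, not_false_eq_true]
      exact measurable_const
  measurable_update m := by
    by_cases hm : m < t
    · simp only [hm, dif_pos]
      refine measurable_pi_lambda _ fun j => ?_
      by_cases hj : j = ⟨m, hm⟩
      · subst hj
        simpa only [Function.update_self] using measurable_snd
      · simp only [Function.update_of_ne hj]
        exact (measurable_pi_apply j).comp measurable_fst
    · simp only [hm, dif_neg, not_false_eq_true]
      exact measurable_fst

lemma toAdaptiveSystem_state_succ (Q : QueryMaps N k t)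
    (hQ : ∀ (j : Fin t) (i : Fin k) (l : Fin N), Measurable fun h => Q j h i l)
    (M : Matrix (Fin N) ι ℝ) (g : ι → ℝ) {m : ℕ} (hm : m < t) :
    ((Q.toAdaptiveSystem hQ M).state (m + 1) g).1 =
      Function.update ((Q.toAdaptiveSystem hQ M).state m g).1 ⟨m, hm⟩
        (Q ⟨m, hm⟩ (fun i => ((Q.toAdaptiveSystem hQ M).state m g).1 ⟨i.1, i.isLt.trans hm⟩) *ᵥ
          (M *ᵥ g)) := by
  rw [mulVec_mulVec]
  change (Q.toAdaptiveSystem hQ M).update m _ ((Q.toAdaptiveSystem hQ M).query m _ *ᵥ g) = _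
  simp only [toAdaptiveSystem, hm, dif_pos]

lemma toAdaptiveSystem_state_apply (Q : QueryMaps N k t)
    (hQ : ∀ (j : Fin t) (i : Fin k) (l : Fin N), Measurable fun h => Q j h i l)
    (M : Matrix (Fin N) ι ℝ) (g : ι → ℝ) {m : ℕ} (hm : m ≤ t) {j : Fin t} (hj : j.1 < m) :
    ((Q.toAdaptiveSystem hQ M).state m g).1 j = Q.resp (M *ᵥ g) j := by
  induction m generalizing j with
  | zero => exact absurd hj (Nat.not_lt_zero _)
  | succ m ih =>
    rw [toAdaptiveSystem_state_succ Q hQ M g hm]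
    rcases eq_or_ne j ⟨m, hm⟩ with rfl | hjm
    · rw [Function.update_self, resp]
      congr 2
      funext i
      exact ih (Nat.le_of_succ_le hm) i.isLt
    · rw [Function.update_of_ne hjm]
      exact ih (Nat.le_of_succ_le hm)
        ((Nat.lt_succ_iff.1 hj).lt_of_ne fun h => hjm (Fin.ext h))

lemma toAdaptiveSystem_state_fst (Q : QueryMaps N k t)
    (hQ : ∀ (j : Fin t) (i : Fin k) (l : Fin N), Measurable fun h => Q j h i l)
    (M : Matrix (Fin N) ι ℝ) (g : ι → ℝ) :
    ((Q.toAdaptiveSystem hQ M).state t g).1 = Q.resp (M *ᵥ g) :=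
  funext fun j => toAdaptiveSystem_state_apply Q hQ M g le_rfl j.isLt

lemma measurable_resp_apply {Ω : Type*} [MeasurableSpace Ω] {Q : Ω → QueryMaps N k t}
    (hQ : ∀ (j : Fin t) (i : Fin k) (l : Fin N),
      Measurable fun p : Ω × (Fin (j : ℕ) → Fin k → ℝ) => Q p.1 j p.2 i l)
    (j : Fin t) : Measurable fun p : Ω × (Fin N → ℝ) => (Q p.1).resp p.2 j := by
  induction j using WellFoundedLT.induction with
  | ind j ih =>
    simp only [resp.eq_def _ _ j]
    refine measurable_mulVec (measurable_matrix_iff.2 fun i l => ?_) measurable_snd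
    exact (hQ j i l).comp (measurable_fst.prodMk
      (measurable_pi_lambda _ fun i' => ih ⟨i'.1, i'.isLt.trans j.isLt⟩ i'.isLt))

lemma measurable_resp {Ω : Type*} [MeasurableSpace Ω] {Q : Ω → QueryMaps N k t}
    (hQ : ∀ (j : Fin t) (i : Fin k) (l : Fin N),
      Measurable fun p : Ω × (Fin (j : ℕ) → Fin k → ℝ) => Q p.1 j p.2 i l) :
    Measurable fun p : Ω × (Fin N → ℝ) => (Q p.1).resp p.2 :=
  measurable_pi_lambda _ (measurable_resp_apply hQ)

end QueryMaps

end Reduction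

/-! ### The Bayes risk inequality -/

section Bayes

open scoped Matrix.Norms.L2Operator

lemma mul_measure_le_of_sum_measure_le {Ω Γ σ : Type*} [MeasurableSpace Ω] [MeasurableSpace Γ]
    [Fintype σ] [Nonempty σ] {μ : Measure Ω} [IsProbabilityMeasure μ] {ν : Measure Γ} [SFinite ν]
    {C : σ → Set (Ω × Γ)} (hC : ∀ s, MeasurableSet (C s)) {G : Set Γ} (hG : MeasurableSet G)
    {q U : ℝ≥0∞} (hlow : ∀ s, ∀ g ∈ G, q ≤ μ {ω | (ω, g) ∈ C s})
    (hup : ∀ ω, ∑ s, ν {g | (ω, g) ∈ C s} ≤ Fintype.card σ * U) : q * ν G ≤ U := by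
  have le_prod (s : σ) : q * ν G ≤ μ.prod ν (C s) := calc
    q * ν G = ∫⁻ _ in G, q ∂ν := (setLIntegral_const _ _).symm
    _ ≤ ∫⁻ g in G, μ {ω | (ω, g) ∈ C s} ∂ν := setLIntegral_mono' hG (hlow s)
    _ ≤ ∫⁻ g, μ {ω | (ω, g) ∈ C s} ∂ν := setLIntegral_le_lintegral _ _
    _ = μ.prod ν (C s) := (Measure.prod_apply_symm (hC s)).symm
  have card_mul_le : Fintype.card σ * (q * ν G) ≤ Fintype.card σ * U := calc
    _ = ∑ _s : σ, q * ν G := by rw [Finset.sum_const, Finset.card_univ, nsmul_eq_mul]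
    _ ≤ ∑ s, μ.prod ν (C s) := Finset.sum_le_sum fun s _ => le_prod s
    _ = ∑ s, ∫⁻ ω, ν {g | (ω, g) ∈ C s} ∂μ :=
        Finset.sum_congr rfl fun s _ => Measure.prod_apply (hC s)
    _ = ∫⁻ ω, ∑ s, ν {g | (ω, g) ∈ C s} ∂μ :=
        (lintegral_finsetSum _ fun s _ => measurable_measure_prodMk_left (hC s)).symm
    _ ≤ ∫⁻ _, Fintype.card σ * U ∂μ := lintegral_mono hup
    _ = Fintype.card σ * U := by rw [lintegral_const, measure_univ, mul_one]
  exact (ENNReal.mul_le_mul_iff_right (Nat.cast_ne_zero.2 Fintype.card_ne_zero)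
    (ENNReal.natCast_ne_top _)).1 card_mul_le

/-- The noise matrices of norm at most `16 √n`. -/
def boundedNoise (n : ℕ) : Set (Fin n × Fin n → ℝ) :=
  {g | ‖of (Function.curry g)‖ ≤ 16 * √n}

lemma measurableSet_boundedNoise (n : ℕ) : MeasurableSet (boundedNoise n) := by
  have hcont : Continuous fun g : Fin n × Fin n → ℝ => of (Function.curry g) :=
    continuous_matrix fun i j => continuous_apply (i, j)
  exact (isClosed_le hcont.norm continuous_const).measurableSet

lemma stdGaussian_compl_boundedNoise_le (n : ℕ) :
    stdGaussian (Fin n × Fin n) (boundedNoise n)ᶜ ≤ ENNReal.ofReal (Real.exp (-n)) := by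
  have compl_eq : (boundedNoise n)ᶜ = {g | 4 * (4 * √n) < ‖of (Function.curry g)‖} := by
    ext g
    simp only [boundedNoise, Set.mem_compl_iff, Set.mem_ofPred_eq, not_le]
    ring_nf
  have htail := stdGaussian_norm_gt_le (ι := Fin n) (κ := Fin n) (a := 4 * √n) (by positivity)
  rw [compl_eq]
  refine htail.trans (ENNReal.ofReal_le_ofReal ?_)
  have h25 : (25 : ℝ) ≤ Real.exp 7 := by
    have h2 : (2 : ℝ) ≤ Real.exp 1 := by linarith [Real.add_one_le_exp (1 : ℝ)]
    calc (25 : ℝ) ≤ 2 ^ 7 := by norm_num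
      _ ≤ Real.exp 1 ^ 7 := by gcongr
      _ = Real.exp 7 := by rw [← Real.exp_nat_mul]; norm_num
  have hsqrt : (4 * √(n : ℝ)) ^ 2 / 2 = 8 * n := by
    rw [mul_pow, Real.sq_sqrt n.cast_nonneg]; ring
  calc (5 : ℝ) ^ (Fintype.card (Fin n) + Fintype.card (Fin n)) * Real.exp (-((4 * √n) ^ 2 / 2))
      = 25 ^ n * Real.exp (-(8 * n)) := by
        rw [Fintype.card_fin, hsqrt, pow_add, ← mul_pow]; norm_num
    _ ≤ Real.exp 7 ^ n * Real.exp (-(8 * n)) := by gcongr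
    _ = Real.exp (-n) := by rw [← Real.exp_nat_mul, ← Real.exp_add]; ring_nf

lemma one_sub_exp_neg_le_stdGaussian_boundedNoise (n : ℕ) :
    ENNReal.ofReal (1 - Real.exp (-n)) ≤ stdGaussian (Fin n × Fin n) (boundedNoise n) := by
  rw [ENNReal.ofReal_sub _ (Real.exp_pos _).le, ENNReal.ofReal_one]
  refine (tsub_le_tsub_left (stdGaussian_compl_boundedNoise_le n) _).trans
    (tsub_le_iff_right.2 ?_)
  rw [prob_add_prob_compl (measurableSet_boundedNoise n)]

variable {n r k t : ℕ}

lemma norm_symmetrization_plantVec_sub_le {κ a : ℝ} (hκ : 0 ≤ κ) (ha : 128 * (κ + 1) ≤ a)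
    (hr : 2 ≤ r) (α : ℝ) (s : (Fin n → Bool) × (Fin n → Bool)) {g : Fin n × Fin n → ℝ}
    (hg : g ∈ boundedNoise n) {B : Matrix (Fin n) (Fin n) ℝ}
    (hB : specNorm (symmetrization (plantVec α s + g) - B) ≤
      κ * singVal (symmetrization (plantVec α s + g)) (r + 1)) :
    ‖symmetrization (plantVec α s) - B‖ ≤ a * √n / 4 := by
  rw [symmetrization_add] at hB
  have hnoise : ‖symmetrization g‖ ≤ 32 * √n := by
    have : ‖of (Function.curry g)‖ ≤ 16 * √n := hg
    linarith [norm_symmetrization_le g]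
  calc _ ≤ (κ + 1) * ‖symmetrization g‖ := norm_sub_le_of_specNorm_le_mul_singVal
        ((rank_symmetrization_tensorVec_le _ _).trans hr) hκ hB
    _ ≤ (κ + 1) * (32 * √n) := by gcongr
    _ = 128 * (κ + 1) * √n / 4 := by ring
    _ ≤ a * √n / 4 := by gcongr

lemma measurableSet_norm_sub_le {X : Type*} [MeasurableSpace X]
    {f : X → Matrix (Fin n) (Fin n) ℝ} (hf : Measurable f) (A : Matrix (Fin n) (Fin n) ℝ) (δ : ℝ) :
    MeasurableSet {x | ‖A - f x‖ ≤ δ} := by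
  have hclosed : IsClosed {B : Matrix (Fin n) (Fin n) ℝ | ‖A - B‖ ≤ δ} :=
    isClosed_le (continuous_const.sub continuous_id).norm continuous_const
  exact hf (IsClosed.measurableSet (α := Fin n → Fin n → ℝ) hclosed)

lemma sum_measureReal_near_plant_le (hn : 0 < n) {Q : QueryMaps (n * n) k t}
    (hQ : ∀ (j : Fin t) (i : Fin k) (l : Fin (n * n)), Measurable fun h => Q j h i l)
    {out : (Fin t → Fin k → ℝ) → Matrix (Fin n) (Fin n) ℝ} (hout : Measurable out)
    {a D : ℝ} (ha : 1 ≤ a) (hD : t * k / n ≤ D) :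
    ∑ s, (stdGaussian (Fin n × Fin n)).real
        {g | ‖symmetrization (plantVec (a / √n) s) -
          out (Q.resp (_root_.vec n (symmetrization (plantVec (a / √n) s + g))))‖ ≤ a * √n / 4} ≤
      4 ^ n * ((2 * t + 1) * Real.exp (-D) +
        4 * Real.exp (3 * D * (16 * a ^ 2) ^ t + D - n / 32)) := by
  have hn₀ : (0 : ℝ) < n := Nat.cast_pos.2 hn
  have : Nonempty (Fin n) := ⟨⟨0, hn⟩⟩
  have hsq : (a / √(n : ℝ)) ^ 2 = a ^ 2 / n := by rw [div_pow, Real.sq_sqrt hn₀.le]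
  have henergy : SubexponentialEnergy (plantVec (ι := Fin n) (a / √n)) (1 / (8 * a ^ 2))
      (1 / (2 * n)) := by
    convert subexponentialEnergy_plantVec (ι := Fin n) (α := a / √n) (θ := 1 / (8 * a ^ 2))
      (by positivity) ?_ using 1
    · rw [hsq]; field_simp; norm_num
    · rw [hsq, Fintype.card_fin]; field_simp; norm_num
  have hcard := card_plants_near_le (ι := Fin n) (α := a / √n) (δ := a * √n / 4) (by positivity) (by
    rw [Fintype.card_fin]
    calc 4 * (a * √n / 4) = a * √n := by ring
      _ ≤ a / √n * n := by rw [div_mul_eq_mul_div, mul_div_assoc, Real.div_sqrt])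
  have hsum := (Q.toAdaptiveSystem hQ (vecSymmetrization n)).sum_measureReal_history_le henergy
    (by positivity) (R := 16 * a ^ 2) (by nlinarith) (by field_simp; norm_num) (t := t) (D := D) (by
      rw [Fintype.card_fin]
      have : (0 : ℝ) ≤ t * k / n := by positivity
      calc 1 / (2 * (n : ℝ)) * (t * k) = t * k / n / 2 := by field_simp
        _ ≤ D := by linarith)
    (E := fun s => {h | ‖symmetrization (plantVec (a / √n) s) - out h‖ ≤ a * √n / 4})
    (fun s => measurableSet_norm_sub_le hout _ _) (fun h => hcard (out h))
  simp only [QueryMaps.toAdaptiveSystem_state_fst, vecSymmetrization_mulVec] at hsum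
  refine hsum.trans_eq ?_
  have hpow : (2 : ℝ) ^ n * 2 ^ n = 4 ^ n := by rw [← mul_pow]; norm_num
  rw [Fintype.card_prod, Fintype.card_fun, Fintype.card_bool, Fintype.card_fin]
  push_cast
  rw [hpow, sub_eq_add_neg _ ((n : ℝ) / 32), Real.exp_add _ (-((n : ℝ) / 32))]
  ring

variable {Ω : Type*} [MeasurableSpace Ω]

/-- The pairs of a seed and a noise for which the randomized algorithm `(Qf, out)` outputs a matrix
near the plant `s` of strength `a / √n`, when run on this plant perturbed by the noise. -/
def recoverySet (Qf : Ω → QueryMaps (n * n) k t)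
    (out : Ω → (Fin t → Fin k → ℝ) → Matrix (Fin n) (Fin n) ℝ) (a : ℝ)
    (s : (Fin n → Bool) × (Fin n → Bool)) : Set (Ω × (Fin n × Fin n → ℝ)) :=
  {q | ‖symmetrization (plantVec (a / √n) s) - out q.1 ((Qf q.1).resp
    (_root_.vec n (symmetrization (plantVec (a / √n) s + q.2))))‖ ≤ a * √n / 4}

variable {Qf : Ω → QueryMaps (n * n) k t}
  {out : Ω → (Fin t → Fin k → ℝ) → Matrix (Fin n) (Fin n) ℝ}

lemma measurableSet_recoverySet
    (hQ : ∀ (j : Fin t) (i : Fin k) (l : Fin (n * n)),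
      Measurable fun q : Ω × (Fin (j : ℕ) → Fin k → ℝ) => Qf q.1 j q.2 i l)
    (hout : Measurable fun q : Ω × (Fin t → Fin k → ℝ) => out q.1 q.2)
    (a : ℝ) (s : (Fin n → Bool) × (Fin n → Bool)) : MeasurableSet (recoverySet Qf out a s) := by
  have measurable_vec : Measurable fun x : Fin n × Fin n → ℝ =>
      _root_.vec n (symmetrization x) := by
    simp only [← vecSymmetrization_mulVec]
    exact measurable_mulVec measurable_const measurable_id
  exact measurableSet_norm_sub_le (hout.comp (measurable_fst.prodMk
    ((QueryMaps.measurable_resp hQ).comp (measurable_fst.prodMk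
      (measurable_vec.comp (measurable_snd.const_add _)))))) _ _

lemma sum_measure_recoverySet_le (hn : 0 < n)
    (hQ : ∀ (j : Fin t) (i : Fin k) (l : Fin (n * n)),
      Measurable fun q : Ω × (Fin (j : ℕ) → Fin k → ℝ) => Qf q.1 j q.2 i l)
    (hout : Measurable fun q : Ω × (Fin t → Fin k → ℝ) => out q.1 q.2)
    {a D : ℝ} (ha : 1 ≤ a) (hD : t * k / n ≤ D) (ω : Ω) :
    ∑ s, stdGaussian (Fin n × Fin n) {g | (ω, g) ∈ recoverySet Qf out a s} ≤
      Fintype.card ((Fin n → Bool) × (Fin n → Bool)) *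
        ENNReal.ofReal ((2 * t + 1) * Real.exp (-D) +
          4 * Real.exp (3 * D * (16 * a ^ 2) ^ t + D - n / 32)) := by
  have hsum := sum_measureReal_near_plant_le hn (Q := Qf ω) (out := out ω)
    (fun j i l => (hQ j i l).comp measurable_prodMk_left) (hout.comp measurable_prodMk_left) ha hD
  have hcard : (4 : ℝ) ^ n = Fintype.card ((Fin n → Bool) × (Fin n → Bool)) := by
    rw [Fintype.card_prod, Fintype.card_fun, Fintype.card_bool, Fintype.card_fin]
    push_cast
    rw [← mul_pow]
    norm_num
  rw [← ENNReal.ofReal_natCast, ← ENNReal.ofReal_mul (Nat.cast_nonneg _), ← hcard]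
  refine le_trans (le_of_eq ?_) (ENNReal.ofReal_le_ofReal hsum)
  rw [ENNReal.ofReal_sum_of_nonneg fun _ _ => measureReal_nonneg]
  exact Finset.sum_congr rfl fun _ _ => (ofReal_measureReal).symm

/-- The Bayes risk inequality: averaging the success over plants, noise and seed, a fixed plant
gives the left-hand side and a fixed seed the right-hand side. -/
lemma mul_one_sub_exp_neg_le_of_success (hn : 0 < n) (hr : 2 ≤ r) {κ a p D : ℝ} (hκ : 0 ≤ κ)
    (ha : 128 * (κ + 1) ≤ a) (hp : 0 ≤ p) (hD : t * k / n ≤ D)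
    {μ : Measure Ω} [IsProbabilityMeasure μ]
    (hQ : ∀ (j : Fin t) (i : Fin k) (l : Fin (n * n)),
      Measurable fun q : Ω × (Fin (j : ℕ) → Fin k → ℝ) => Qf q.1 j q.2 i l)
    (hout : Measurable fun q : Ω × (Fin t → Fin k → ℝ) => out q.1 q.2)
    (hsucc : ∀ A : Matrix (Fin n) (Fin n) ℝ, A.IsSymm → ENNReal.ofReal p ≤
      μ {ω | specNorm (A - out ω ((Qf ω).resp (_root_.vec n A))) ≤ κ * singVal A (r + 1)}) :
    p * (1 - Real.exp (-n)) ≤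
      (2 * t + 1) * Real.exp (-D) + 4 * Real.exp (3 * D * (16 * a ^ 2) ^ t + D - n / 32) := by
  have fixed_plant (s) (g) (hg : g ∈ boundedNoise n) :
      ENNReal.ofReal p ≤ μ {ω | (ω, g) ∈ recoverySet Qf out a s} :=
    (hsucc _ (symmetrization_isSymm (plantVec (a / √n) s + g))).trans
      (measure_mono fun _ hω => norm_symmetrization_plantVec_sub_le hκ ha hr _ s hg hω)
  have hbayes := mul_measure_le_of_sum_measure_le (measurableSet_recoverySet hQ hout a)
    (measurableSet_boundedNoise n) fixed_plant
    (sum_measure_recoverySet_le hn hQ hout (by linarith) hD)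
  rw [← ENNReal.ofReal_le_ofReal_iff (by positivity), ENNReal.ofReal_mul hp]
  exact (mul_le_mul_right (one_sub_exp_neg_le_stdGaussian_boundedNoise n) _).trans hbayes

end Bayes

section Numerics

lemma lt_of_mul_one_sub_exp_neg_le {p n D R C : ℝ} {t : ℕ} (hp : 0 < p) (hpC : 8 ≤ p * C)
    (hn : 3 ≤ n) (hpn : 1024 ≤ p * n) (hR : 1 ≤ R) (hD : t + C ≤ D)
    (hbayes : p * (1 - Real.exp (-n)) ≤
      (2 * t + 1) * Real.exp (-D) + 4 * Real.exp (3 * D * R ^ t + D - n / 32)) :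
    n < 256 * (D * R ^ t) := by
  by_contra! hsmall
  have exp_neg_le {x : ℝ} (hx : 0 < x) : Real.exp (-x) ≤ 1 / x := by
    rw [Real.exp_neg, ← one_div]
    exact one_div_le_one_div_of_le hx (by linarith [Real.add_one_le_exp x])
  have hC : 0 < C := by nlinarith
  have hD₀ : 0 ≤ D := by linarith [t.cast_nonneg (α := ℝ)]
  have hexp : 1 - Real.exp (-n) ≥ 2 / 3 := by
    have : 1 / n ≤ 1 / 3 := one_div_le_one_div_of_le (by norm_num) hn
    linarith [exp_neg_le (x := n) (by linarith)]
  have hfirst : (2 * t + 1) * Real.exp (-D) ≤ p / 4 := calc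
    _ ≤ 2 * Real.exp t * Real.exp (-(t + C)) := by
        gcongr
        linarith [Real.add_one_le_exp (t : ℝ)]
    _ = 2 * Real.exp (-C) := by rw [mul_assoc, ← Real.exp_add]; ring_nf
    _ ≤ 2 * (1 / C) := by gcongr; exact exp_neg_le hC
    _ ≤ p / 4 := by rw [mul_one_div, div_le_iff₀ hC]; linarith
  have hsecond : 4 * Real.exp (3 * D * R ^ t + D - n / 32) ≤ p / 4 := calc
    _ ≤ 4 * Real.exp (-(n / 64)) := by
        gcongr
        linarith [le_mul_of_one_le_right hD₀ (one_le_pow₀ hR : 1 ≤ R ^ t)]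
    _ ≤ 4 * (1 / (n / 64)) := by gcongr; exact exp_neg_le (by linarith)
    _ ≤ p / 4 := by
        rw [mul_one_div, div_le_iff₀ (by linarith)]
        linarith
  nlinarith

/-- The factor `t` of `t * K / n` is absorbed into `exp 1 ^ t`. -/
lemma log_div_le_mul_log {n K R C : ℝ} {t : ℕ} (hC : 0 ≤ C) (hR : 1 ≤ R) (hnK : n ≤ K)
    (hn : 0 < n) (hCn : 256 * C ≤ n) (h : n < 256 * ((t * K / n + C) * R ^ t)) :
    Real.log (n ^ 2 / K) ≤ t * Real.log (256 * (1 + C) * (Real.exp 1 * R)) := by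
  have hK : 0 < K := hn.trans_le hnK
  have ht : (1 : ℝ) ≤ t := by
    rcases t.eq_zero_or_pos with rfl | ht
    · simp only [Nat.cast_zero, pow_zero] at h
      rw [zero_mul, zero_div] at h
      linarith
    · exact_mod_cast ht
  have hratio : 1 ≤ t * K / n := by
    rw [one_le_div hn]
    nlinarith
  have hpow : 256 * (1 + C) ≤ (256 * (1 + C)) ^ t :=
    le_self_pow₀ (by linarith) (by rintro rfl; norm_num at ht)
  have hexp : (t : ℝ) ≤ Real.exp 1 ^ t := by
    rw [← Real.exp_nat_mul, mul_one]
    linarith [Real.add_one_le_exp (t : ℝ)]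
  have hlt : n ^ 2 / K ≤ (256 * (1 + C) * (Real.exp 1 * R)) ^ t := calc
    n ^ 2 / K = n * (n / K) := by ring
    _ ≤ 256 * ((t * K / n + C * (t * K / n)) * R ^ t) * (n / K) := by
        gcongr
        refine h.le.trans ?_
        gcongr
        exact le_mul_of_one_le_right hC hratio
    _ = 256 * (1 + C) * (t * R ^ t) := by field_simp
    _ ≤ (256 * (1 + C)) ^ t * (Real.exp 1 ^ t * R ^ t) := by gcongr
    _ = _ := by rw [← mul_pow, ← mul_pow]
  calc _ ≤ Real.log ((256 * (1 + C) * (Real.exp 1 * R)) ^ t) := Real.log_le_log (by positivity) hlt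
    _ = _ := Real.log_pow _ _

lemma log_sq_div_le_two_mul {n k b : ℝ} (hn : 1 ≤ n) (hk : 1 ≤ k) (hb : 0 ≤ b)
    (h : Real.log (n ^ 2 / max k n) ≤ b) : Real.log (n ^ 2 / k) ≤ 2 * b := by
  rcases le_total n k with hnk | hkn
  · rw [max_eq_left hnk] at h
    linarith
  · rw [max_eq_right hkn, sq, mul_self_div_self] at h
    calc Real.log (n ^ 2 / k) ≤ Real.log (n ^ 2) :=
          Real.log_le_log (by positivity) (div_le_self (by positivity) hk)
      _ = 2 * Real.log n := by rw [Real.log_pow, Nat.cast_ofNat]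
      _ ≤ 2 * b := by gcongr

lemma one_le_log_log {x : ℝ} (hx : Real.exp (Real.exp 1) ≤ x) : 1 ≤ Real.log (Real.log x) := by
  have hlog : Real.exp 1 ≤ Real.log x :=
    (Real.le_log_iff_exp_le ((Real.exp_pos _).trans_le hx)).2 hx
  exact (Real.le_log_iff_exp_le ((Real.exp_pos _).trans_le hlog)).2 hlog

end Numerics

theorem symmetric_spectral_LRA_round_lower_bound_general {p κ : ℝ} (hp : 0 < p) (hκ : 0 ≤ κ) :
    ∃ (c : ℝ) (n₀ : ℕ), 0 < c ∧ ∀ (n r k t : ℕ), n₀ ≤ n → 2 ≤ r → 1 ≤ k →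
      ∀ {Ω : Type*} [MeasurableSpace Ω] (μ : Measure Ω) [IsProbabilityMeasure μ]
        (Qf : Ω → QueryMaps (n * n) k t)
        (out : Ω → (Fin t → Fin k → ℝ) → Matrix (Fin n) (Fin n) ℝ),
        (∀ (j : Fin t) (i : Fin k) (l : Fin (n * n)),
            Measurable fun q : Ω × (Fin (j : ℕ) → Fin k → ℝ) => Qf q.1 j q.2 i l) →
        (∀ i j : Fin n, Measurable fun q : Ω × (Fin t → Fin k → ℝ) => out q.1 q.2 i j) →
        (∀ A : Matrix (Fin n) (Fin n) ℝ, A.IsSymm →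
            ENNReal.ofReal p ≤ μ {ω | specNorm (A - out ω ((Qf ω).resp (_root_.vec n A))) ≤
              κ * singVal A (r + 1)}) →
        c * Real.log ((n : ℝ) ^ 2 / k) ≤ t := by
  obtain ⟨R, hR⟩ : ∃ R, R = 16 * (128 * (κ + 1)) ^ 2 := ⟨_, rfl⟩
  obtain ⟨C, hC⟩ : ∃ C, C = 8 / p := ⟨_, rfl⟩
  have hR₁ : 1 ≤ R := by rw [hR]; nlinarith
  have hC₀ : 0 < C := by rw [hC]; positivity
  have hlog : 0 < Real.log (256 * (1 + C) * (Real.exp 1 * R)) := Real.log_pos (by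
    have : 1 ≤ Real.exp 1 * R := one_le_mul_of_one_le_of_one_le (Real.one_le_exp zero_le_one) hR₁
    nlinarith)
  refine ⟨(2 * Real.log (256 * (1 + C) * (Real.exp 1 * R)))⁻¹, max 3 ⌈256 * C⌉₊, by positivity,
    fun n r k t hn hr hk Ω _ μ _ Qf out hQ hout hsucc => ?_⟩
  have hn₃ : (3 : ℝ) ≤ n := mod_cast (le_max_left _ _).trans hn
  have hCn : 256 * C ≤ n := (Nat.le_ceil _).trans (mod_cast (le_max_right _ _).trans hn)
  have hk₁ : (1 : ℝ) ≤ k := mod_cast hk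
  have hpC : p * C = 8 := by rw [hC]; field_simp
  have hbayes := mul_one_sub_exp_neg_le_of_success (D := t * max (k : ℝ) n / n + C) (by omega) hr
    hκ le_rfl hp.le (by
      have : t * k / n ≤ t * max (k : ℝ) n / n := by gcongr; exact le_max_left _ _
      linarith) hQ (measurable_matrix_iff.2 hout) hsucc
  rw [← hR] at hbayes
  have hlt := lt_of_mul_one_sub_exp_neg_le hp hpC.ge hn₃ (by nlinarith) hR₁ (by
    gcongr
    rw [le_div_iff₀ (by linarith)]
    gcongr
    exact le_max_right _ _) hbayes
  have hrounds := log_sq_div_le_two_mul (by linarith) hk₁ (by positivity)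
    (log_div_le_mul_log hC₀.le hR₁ (le_max_right _ _) (by linarith) hCn hlt)
  rw [inv_mul_le_iff₀ (by positivity)]
  linarith

/-- Round lower bound for 2-approximate spectral norm low-rank approximation of
symmetric matrices, for rank `r ≥ 2`. -/
theorem symmetric_spectral_LRA_round_lower_bound :
    ∃ (c : ℝ) (n₀ : ℕ), 0 < c ∧
      ∀ (n r k t : ℕ), n₀ ≤ n → 2 ≤ r → n * r ≤ k → k ≤ n ^ 2 →
      ∀ (Ω : Type) [MeasurableSpace Ω] (μ : Measure Ω) [IsProbabilityMeasure μ]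
        (Qf : Ω → QueryMaps (n * n) k t)
        (out : Ω → (Fin t → Fin k → ℝ) → Matrix (Fin n) (Fin n) ℝ),
        (∀ ω, (Qf ω).Valid) →
        (∀ (j : Fin t) (i : Fin k) (l : Fin (n * n)),
            Measurable fun p : Ω × (Fin (j : ℕ) → Fin k → ℝ) => Qf p.1 j p.2 i l) →
        (∀ i j : Fin n,
            Measurable fun p : Ω × (Fin t → Fin k → ℝ) => out p.1 p.2 i j) →
        (∀ A : Matrix (Fin n) (Fin n) ℝ, A.IsSymm →
            (99 / 100 : ℝ≥0∞) ≤
              μ {ω | (out ω (QueryMaps.resp (Qf ω) (vec n A))).rank ≤ r ∧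
                    specNorm (A - out ω (QueryMaps.resp (Qf ω) (vec n A)))
                      ≤ 2 * singVal A (r + 1)}) →
        c * (Real.log ((n : ℝ) ^ 2 / k) / Real.log (Real.log n)) ≤ (t : ℝ) := by
  obtain ⟨c, n₀, hc, hbound⟩ := symmetric_spectral_LRA_round_lower_bound_general
    (p := 99 / 100) (κ := 2) (by norm_num) (by norm_num)
  refine ⟨c, max n₀ ⌈Real.exp (Real.exp 1)⌉₊, hc,
    fun n r k t hn hr hnk hkn Ω _ μ _ Qf out _ hQ hout hsucc => ?_⟩
  have hn_exp : Real.exp (Real.exp 1) ≤ n :=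
    (Nat.le_ceil _).trans (mod_cast (le_max_right _ _).trans hn)
  have hn_pos : 0 < n := Nat.cast_pos.1 ((Real.exp_pos _).trans_le hn_exp)
  have hk : 1 ≤ k := (Nat.mul_pos hn_pos (by omega)).trans_le hnk
  have hlog : 0 ≤ Real.log ((n : ℝ) ^ 2 / k) :=
    Real.log_nonneg ((one_le_div (Nat.cast_pos.2 hk)).2 (mod_cast hkn))
  have hp : ENNReal.ofReal (99 / 100) = 99 / 100 := by
    rw [ENNReal.ofReal_div_of_pos (by norm_num), ENNReal.ofReal_ofNat, ENNReal.ofReal_ofNat]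
  calc _ ≤ c * Real.log ((n : ℝ) ^ 2 / k) := by
        gcongr
        exact div_le_self hlog (one_le_log_log hn_exp)
    _ ≤ t := hbound n r k t ((le_max_left _ _).trans hn) hr hk μ Qf out hQ hout fun A hA =>
        hp.le.trans ((hsucc A hA).trans (measure_mono fun _ h => h.2))

end
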